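/- arXiv:1101.0013 — 2 statements merged into one kernel-verified Lean document; each statement's English description precedes it below -/
import Mathlib

section
/- Let n ≥ 2 and 0 < σ < 1, and let ω(X) = t^{1−2σ} for X = (x,t), t > 0. Let U ∈ C¹(Q₁ ∪ ∂'Q₁) be a nonnegative weak supersolution in Q₁ (for every nonnegative φ ∈ C¹ with compact support in Q₁ ∪ ∂'Q₁: −∫_{Q₁} t^{1−2σ} ∇U·∇φ dX + ∫_{B₁}(a(x)U(x,0)+b(x))φ(x,0) dx ≤ 0), with a, b bounded measurable on B₁, and with ∫_{Q₁} t^{1−2σ}(U² + |∇U|²) dX < ∞. Let k > 0 satisfy k ≥ ‖b‖_{L^∞(B₁)} and set W = log(U + k). Then there is C > 0 depending only on n, σ and ‖a‖_{L^∞(B₁)} such that for every y ∈ B₁ and r > 0 with B_{2r}(y) × (0,2r) ⊂ Q₁, writing Q_r(y) = B_r(y) × (0,r), ω(Q_r(y)) = ∫_{Q_r(y)} ω dX, and W_{y,r} = ω(Q_r(y))^{−1} ∫_{Q_r(y)} W ω dX, one has ω(Q_r(y))^{−1} ∫_{Q_r(y)} |W − W_{y,r}| ω dX ≤ C. That is,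 W has bounded mean oscillation with respect to the weight t^{1−2σ} over such boxes. -/
open MeasureTheory Metric Set Real

noncomputable section

/-- Points of `ℝ^{n+1}` written as `X = (x, t)` with `x ∈ ℝⁿ`, `t ∈ ℝ`. -/
abbrev Pt (n : ℕ) := EuclideanSpace ℝ (Fin n) × ℝ

/-- The box `Q_R = B_R × (0, R) ⊂ ℝ^{n+1}`. -/
def Q (n : ℕ) (R : ℝ) : Set (Pt n) :=
  (ball (0 : EuclideanSpace ℝ (Fin n)) R) ×ˢ (Ioo (0 : ℝ) R)

/-- The bottom boundary `∂'Q_R = B_R × {0}`. -/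
def Q' (n : ℕ) (R : ℝ) : Set (Pt n) :=
  (ball (0 : EuclideanSpace ℝ (Fin n)) R) ×ˢ ({(0 : ℝ)} : Set ℝ)

/-- The inner product `∇U · ∇φ` of the gradients of `U, φ : ℝⁿ × ℝ → ℝ` at `X`,
computed in the standard orthonormal basis of `ℝⁿ × ℝ`. -/
def gradDot (n : ℕ) (U φ : Pt n → ℝ) (X : Pt n) : ℝ :=
  (∑ i : Fin n,
      fderiv ℝ U X ((EuclideanSpace.single i (1 : ℝ)), (0 : ℝ)) *
        fderiv ℝ φ X ((EuclideanSpace.single i (1 : ℝ)), (0 : ℝ)))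
    + fderiv ℝ U X ((0 : EuclideanSpace ℝ (Fin n)), (1 : ℝ)) *
        fderiv ℝ φ X ((0 : EuclideanSpace ℝ (Fin n)), (1 : ℝ))

/-- `U` is a weak subsolution of `div(t^{1−2σ}∇U) ≥ 0` in `Q₁`,
`−lim_{t→0⁺} t^{1−2σ}∂ₜU ≤ aU + b` on `∂'Q₁`: for every nonnegative `C¹` test
function `φ` compactly supported in `Q₁ ∪ ∂'Q₁`,
`−∫_{Q₁} t^{1−2σ} ∇U·∇φ + ∫_{B₁} (aU(x,0)+b)φ(x,0) ≥ 0`. -/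
def IsWeakSubsol (n : ℕ) (σ : ℝ) (U : Pt n → ℝ)
    (a b : EuclideanSpace ℝ (Fin n) → ℝ) : Prop :=
  ∀ φ : Pt n → ℝ, ContDiff ℝ 1 φ → HasCompactSupport φ →
    tsupport φ ⊆ Q n 1 ∪ Q' n 1 → (∀ X, 0 ≤ φ X) →
    0 ≤ -(∫ X in Q n 1, X.2 ^ (1 - 2 * σ) * gradDot n U φ X)
        + ∫ x in ball (0 : EuclideanSpace ℝ (Fin n)) 1,
            (a x * U (x, 0) + b x) * φ (x, 0)

/-- `U` is a weak supersolution of `div(t^{1−2σ}∇U) ≤ 0` in `Q₁`,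
`−lim_{t→0⁺} t^{1−2σ}∂ₜU ≥ aU + b` on `∂'Q₁`: for every nonnegative `C¹` test
function `φ` compactly supported in `Q₁ ∪ ∂'Q₁`,
`−∫_{Q₁} t^{1−2σ} ∇U·∇φ + ∫_{B₁} (aU(x,0)+b)φ(x,0) ≤ 0`. -/
def IsWeakSupersol (n : ℕ) (σ : ℝ) (U : Pt n → ℝ)
    (a b : EuclideanSpace ℝ (Fin n) → ℝ) : Prop :=
  ∀ φ : Pt n → ℝ, ContDiff ℝ 1 φ → HasCompactSupport φ →
    tsupport φ ⊆ Q n 1 ∪ Q' n 1 → (∀ X, 0 ≤ φ X) →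
    -(∫ X in Q n 1, X.2 ^ (1 - 2 * σ) * gradDot n U φ X)
        + ∫ x in ball (0 : EuclideanSpace ℝ (Fin n)) 1,
            (a x * U (x, 0) + b x) * φ (x, 0) ≤ 0

open scoped ENNReal

theorem lintegral_comp_smul_add {E : Type*} [NormedAddCommGroup E] [NormedSpace ℝ E]
    [FiniteDimensional ℝ E] [MeasurableSpace E] [BorelSpace E] (μ : Measure E)
    [μ.IsAddHaarMeasure] {s : ℝ} (hs : 0 < s) (v : E) (G : E → ℝ≥0∞) :
    ∫⁻ X, G (s • X + v) ∂μ =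
      ENNReal.ofReal ((s ^ Module.finrank ℝ E)⁻¹) * ∫⁻ X, G X ∂μ := by
  have h : ∫⁻ X, G (s • X + v) ∂μ = ∫⁻ X, G (X + v) ∂(Measure.map (s • ·) μ) :=
    (lintegral_map_equiv (fun X => G (X + v))
      (Homeomorph.smulOfNeZero s hs.ne').toMeasurableEquiv).symm
  rw [h, Measure.map_addHaar_smul μ hs.ne', lintegral_smul_measure,
    lintegral_add_right_eq_self, abs_of_pos (by positivity), smul_eq_mul]

theorem enorm_sub_le_lintegral_fderiv_segment {E : Type*} [NormedAddCommGroup E]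
    [NormedSpace ℝ E] {S : Set E} (hS : IsOpen S) (hc : Convex ℝ S) {V : E → ℝ}
    (hV : ContDiffOn ℝ 1 V S) {X Y : E} (hX : X ∈ S) (hY : Y ∈ S) :
    ‖V Y - V X‖ₑ ≤
      ∫⁻ θ in Icc (0 : ℝ) 1, ‖fderiv ℝ V ((1 - θ) • X + θ • Y)‖ₑ * ‖Y - X‖ₑ := by
  have hmem : ∀ θ ∈ Icc (0 : ℝ) 1, (1 - θ) • X + θ • Y ∈ S := fun θ hθ =>
    hc hX hY (by linarith [hθ.2]) hθ.1 (by ring)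
  have hd : ∀ θ : ℝ, HasDerivAt (fun θ : ℝ => (1 - θ) • X + θ • Y) (Y - X) θ := by
    intro θ
    have h1 := ((hasDerivAt_id θ).const_sub 1).smul_const X
    have h2 := (hasDerivAt_id θ).smul_const Y
    refine (h1.add h2).congr_deriv ?_
    simp [sub_eq_neg_add]
  have hcd : ContDiff ℝ 1 (fun θ : ℝ => (1 - θ) • X + θ • Y) := by fun_prop
  have h := enorm_sub_le_lintegral_deriv_of_contDiffOn_Icc
    (f := fun θ : ℝ => V ((1 - θ) • X + θ • Y)) (a := 0) (b := 1)
    (hV.comp hcd.contDiffOn hmem) zero_le_one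
  simp only [sub_self, zero_smul, one_smul, zero_add, sub_zero, add_zero] at h
  refine h.trans (setLIntegral_mono' measurableSet_Icc fun θ hθ => ?_)
  have hdV : DifferentiableAt ℝ V ((1 - θ) • X + θ • Y) :=
    (hV.contDiffAt (hS.mem_nhds (hmem θ hθ))).differentiableAt one_ne_zero
  have hcomp : deriv (fun θ : ℝ => V ((1 - θ) • X + θ • Y)) θ = _ :=
    (hdV.hasFDerivAt.comp_hasDerivAt θ (hd θ)).deriv
  rw [hcomp]
  exact ContinuousLinearMap.le_opENorm _ _

theorem lintegral_hardy_kernel_le {α : ℝ} (hα : -1 < α) (hα1 : α ≤ 1) {z s : ℝ} (hz : 0 < z)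
    (hs : 1 / 2 < s) :
    ∫⁻ θ in Icc (0 : ℝ) (1 / 2),
        (if θ * s < z then ENNReal.ofReal (((z - θ * s) / (1 - θ)) ^ α) else 0) ≤
      ENNReal.ofReal (4 / (α + 1)) * ENNReal.ofReal (z ^ (α + 1)) := by
  have hs0 : 0 < s := by linarith
  have hα' : 0 < α + 1 := by linarith
  have hzs : 0 < z / s := div_pos hz hs0
  have hpt : ∀ θ ∈ Icc (0 : ℝ) (1 / 2),
      (if θ * s < z then ENNReal.ofReal (((z - θ * s) / (1 - θ)) ^ α) else 0) ≤
      (Ico 0 (z / s)).indicator (fun θ => ENNReal.ofReal (2 * (z - s * θ) ^ α)) θ := by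
    intro θ hθ
    split_ifs with h
    · have hm : θ ∈ Ico 0 (z / s) := ⟨hθ.1, by rwa [lt_div_iff₀ hs0]⟩
      rw [indicator_of_mem hm]
      apply ENNReal.ofReal_le_ofReal
      have h1 : (0 : ℝ) < 1 - θ := by linarith [hθ.2]
      rw [div_rpow (by linarith) h1.le, div_le_iff₀ (rpow_pos_of_pos h1 _), mul_comm s θ]
      have h2 : (1 / 2 : ℝ) ≤ (1 - θ) ^ α :=
        calc (1 / 2 : ℝ) ≤ (1 - θ) ^ (1 : ℝ) := by rw [rpow_one]; linarith [hθ.2]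
          _ ≤ (1 - θ) ^ α := rpow_le_rpow_of_exponent_ge h1 (by linarith [hθ.1]) hα1
      have h3 : 0 ≤ (z - θ * s) ^ α := rpow_nonneg (by linarith) _
      nlinarith
    · exact zero_le
  refine (setLIntegral_mono' measurableSet_Icc hpt).trans ?_
  refine (setLIntegral_le_lintegral _ _).trans ?_
  rw [lintegral_indicator measurableSet_Ico, restrict_Ico_eq_restrict_Ioc]
  have hint : IntervalIntegrable (fun θ => (z - s * θ) ^ α) volume 0 (z / s) := by
    have := (intervalIntegral.intervalIntegrable_rpow' (a := 0) (b := z) hα).comp_mul_left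
      (c := s)
    have h2 := (this.comp_sub_left (z / s))
    simp only [zero_div, sub_zero, sub_self] at h2
    refine (h2.symm.congr ?_)
    intro θ _
    simp only
    congr 1
    field_simp
  have hint2 := hint.const_mul 2
  rw [intervalIntegrable_iff_integrableOn_Ioc_of_le hzs.le] at hint2
  rw [← ofReal_integral_eq_lintegral_ofReal hint2, ← intervalIntegral.integral_of_le hzs.le,
    intervalIntegral.integral_const_mul,
    intervalIntegral.integral_comp_sub_mul (fun x => x ^ α) hs0.ne', integral_rpow (Or.inl hα),
    ← ENNReal.ofReal_mul (by positivity)]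
  · apply ENNReal.ofReal_le_ofReal
    have : z - s * (z / s) = 0 := by field_simp; ring
    rw [this, mul_zero, sub_zero, zero_rpow hα'.ne', sub_zero, smul_eq_mul]
    have h4 : s⁻¹ ≤ 2 := by rw [inv_le_comm₀ hs0 two_pos]; linarith
    have h5 : 0 ≤ z ^ (α + 1) / (α + 1) := by positivity
    have h6 : 4 / (α + 1) * z ^ (α + 1) = 4 * (z ^ (α + 1) / (α + 1)) := by ring
    rw [h6]
    nlinarith
  · filter_upwards [ae_restrict_mem measurableSet_Ioc] with θ hθ
    have : s * θ ≤ z := by rw [mul_comm]; exact (le_div_iff₀ hs0).1 hθ.2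
    exact mul_nonneg zero_le_two (rpow_nonneg (by linarith) _)

theorem mean_oscillation_le {Ω : Type*} [MeasurableSpace Ω] {μ : Measure Ω} {w W : Ω → ℝ}
    (hw : Integrable w μ) (hw0 : 0 ≤ᵐ[μ] w) (hpos : 0 < ∫ X, w X ∂μ)
    (hW : AEStronglyMeasurable W μ) {c : ℝ} {C : ℝ≥0∞} (hC : C ≠ ∞)
    (h : ∫⁻ X, ENNReal.ofReal (w X) * ‖W X - c‖ₑ ∂μ ≤ C * ∫⁻ X, ENNReal.ofReal (w X) ∂μ) :
    (∫ X, |W X - (∫ Y, W Y * w Y ∂μ) / ∫ Y, w Y ∂μ| * w X ∂μ) / ∫ Y, w Y ∂μ ≤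
      2 * C.toReal := by
  set I := ∫ Y, w Y ∂μ
  have hI : ∫⁻ X, ENNReal.ofReal (w X) ∂μ = ENNReal.ofReal I :=
    (ofReal_integral_eq_lintegral_ofReal hw hw0).symm
  have hlint : ∫⁻ X, ‖(W X - c) * w X‖ₑ ∂μ ≤ C * ENNReal.ofReal I := by
    rw [← hI]
    refine le_trans (le_of_eq (lintegral_congr_ae ?_)) h
    filter_upwards [hw0] with X hX
    rw [enorm_mul, Real.enorm_of_nonneg hX, mul_comm]
  have hg : Integrable (fun X => (W X - c) * w X) μ :=
    ⟨(hW.sub aestronglyMeasurable_const).mul hw.aestronglyMeasurable,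
      hlint.trans_lt (by finiteness)⟩
  have hgn : ∫ X, ‖(W X - c) * w X‖ ∂μ ≤ C.toReal * I := by
    rw [integral_norm_eq_lintegral_enorm hg.aestronglyMeasurable]
    refine (ENNReal.toReal_mono (by finiteness) hlint).trans_eq ?_
    rw [ENNReal.toReal_mul, ENNReal.toReal_ofReal hpos.le]
  have hmean : (∫ Y, W Y * w Y ∂μ) / I = c + (∫ Y, (W Y - c) * w Y ∂μ) / I := by
    have h1 : ∫ Y, W Y * w Y ∂μ = (∫ Y, (W Y - c) * w Y ∂μ) + c * I := by
      rw [← integral_const_mul, ← integral_add hg (hw.const_mul c)]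
      congr 1
      funext Y
      ring
    rw [h1]
    field_simp
    ring
  rw [hmean, div_le_iff₀ hpos]
  set e := (∫ Y, (W Y - c) * w Y ∂μ) / I
  have he : |e| * I ≤ C.toReal * I := by
    rw [abs_div, abs_of_pos hpos, div_mul_cancel₀ _ hpos.ne']
    exact (norm_integral_le_integral_norm _).trans hgn
  calc ∫ X, |W X - (c + e)| * w X ∂μ ≤ ∫ X, (‖(W X - c) * w X‖ + |e| * w X) ∂μ := by
        refine integral_mono_of_nonneg ?_ (hg.norm.add (hw.const_mul _)) ?_
        · filter_upwards [hw0] with X hX using mul_nonneg (abs_nonneg _) hX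
        · filter_upwards [hw0] with X hX
          have hX' : 0 ≤ w X := hX
          simp only [norm_mul, Real.norm_eq_abs, abs_of_nonneg hX']
          rw [← add_mul]
          gcongr
          calc |W X - (c + e)| = |(W X - c) - e| := by ring_nf
            _ ≤ _ := abs_sub _ _
    _ = (∫ X, ‖(W X - c) * w X‖ ∂μ) + |e| * I := by
        rw [integral_add hg.norm (hw.const_mul _), integral_const_mul]
    _ ≤ 2 * C.toReal * I := by linarith

section Cylinder

/-- The box `Q_r(y) = B_r(y) × (0, r)`. -/
def cyl (n : ℕ) (y : EuclideanSpace ℝ (Fin n)) (r : ℝ) : Set (Pt n) :=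
  ball y r ×ˢ Ioo (0 : ℝ) r

/-- The weight `t ^ α` as an extended nonnegative real. -/
def wt (n : ℕ) (α : ℝ) (X : Pt n) : ℝ≥0∞ := ENNReal.ofReal (X.2 ^ α)

variable {n : ℕ} {α : ℝ}

instance : (volume : Measure (Pt n)).IsAddHaarMeasure :=
  inferInstanceAs ((volume : Measure (EuclideanSpace ℝ (Fin n))).prod
    (volume : Measure ℝ)).IsAddHaarMeasure

theorem measurable_wt : Measurable (wt n α) := by
  unfold wt
  fun_prop

theorem isOpen_cyl (y : EuclideanSpace ℝ (Fin n)) (r : ℝ) : IsOpen (cyl n y r) :=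
  isOpen_ball.prod isOpen_Ioo

theorem measurableSet_cyl (y : EuclideanSpace ℝ (Fin n)) (r : ℝ) : MeasurableSet (cyl n y r) :=
  (isOpen_cyl y r).measurableSet

theorem convex_cyl (y : EuclideanSpace ℝ (Fin n)) (r : ℝ) : Convex ℝ (cyl n y r) :=
  (convex_ball y r).prod (convex_Ioo 0 r)

theorem lintegral_wt_cyl_one_ne_top (hα : -1 < α) :
    ∫⁻ X in cyl n 0 1, wt n α X ≠ ∞ := by
  have h1 : ∫⁻ t in Ioo (0 : ℝ) 1, ENNReal.ofReal (t ^ α) ≠ ∞ := by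
    have h := intervalIntegral.intervalIntegrable_rpow' (a := 0) (b := 1) hα
    rw [intervalIntegrable_iff_integrableOn_Ioo_of_le zero_le_one] at h
    exact h.lintegral_lt_top.ne
  have h2 : ∫⁻ X in cyl n 0 1, wt n α X =
      ∫⁻ _ in ball (0 : EuclideanSpace ℝ (Fin n)) 1,
        ∫⁻ t in Ioo (0 : ℝ) 1, ENNReal.ofReal (t ^ α) := by
    unfold cyl
    rw [Measure.volume_eq_prod, ← Measure.prod_restrict,
      lintegral_prod _ measurable_wt.aemeasurable]
    rfl
  rw [h2, setLIntegral_const]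
  exact ENNReal.mul_ne_top h1 measure_ball_lt_top.ne

theorem lintegral_wt_cyl_one_ne_zero : ∫⁻ X in cyl n 0 1, wt n α X ≠ 0 := by
  rw [← pos_iff_ne_zero, setLIntegral_pos_iff measurable_wt]
  refine ((isOpen_cyl 0 1).measure_pos volume
    ⟨(0, 1 / 2), mem_ball_self one_pos, by norm_num, by norm_num⟩).trans_le (measure_mono ?_)
  intro X hX
  exact ⟨(ENNReal.ofReal_pos.2 (rpow_pos_of_pos hX.2.1 _)).ne', hX⟩

/-- The contribution to the segment average of `F` of the half of the segment close to `X`. -/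
theorem lintegral_wt_mul_lintegral_near_le (hα : -1 < α) (hα1 : α ≤ 1) {F : Pt n → ℝ≥0∞}
    (hF : Measurable F) (hF0 : ∀ z, z ∉ cyl n 0 1 → F z = 0) {Y : Pt n}
    (hY : 1 / 2 < Y.2) :
    ∫⁻ X in cyl n 0 1, wt n α X *
        ∫⁻ θ in Icc (0 : ℝ) (1 / 2), F ((1 - θ) • X + θ • Y) ≤
      ENNReal.ofReal (2 ^ Module.finrank ℝ (Pt n)) * (ENNReal.ofReal (4 / (α + 1)) *
        ∫⁻ z, F z * wt n (α + 1) z) := by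
  set d := Module.finrank ℝ (Pt n)
  let K : ℝ → Pt n → ℝ≥0∞ := fun θ z =>
    if θ * Y.2 < z.2 then ENNReal.ofReal (((z.2 - θ * Y.2) / (1 - θ)) ^ α) else 0
  have hK : Measurable (Function.uncurry K) := by
    refine Measurable.ite (measurableSet_lt (by fun_prop) (by fun_prop)) (by fun_prop)
      measurable_const
  calc ∫⁻ X in cyl n 0 1, wt n α X * ∫⁻ θ in Icc (0 : ℝ) (1 / 2), F ((1 - θ) • X + θ • Y)
      = ∫⁻ X in cyl n 0 1, ∫⁻ θ in Icc (0 : ℝ) (1 / 2),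
          wt n α X * F ((1 - θ) • X + θ • Y) := by
        refine lintegral_congr fun X => (lintegral_const_mul _ ?_).symm
        fun_prop
    _ = ∫⁻ θ in Icc (0 : ℝ) (1 / 2), ∫⁻ X in cyl n 0 1,
          wt n α X * F ((1 - θ) • X + θ • Y) := by
        refine lintegral_lintegral_swap (Measurable.aemeasurable ?_)
        exact (measurable_wt.comp measurable_fst).mul (hF.comp (by fun_prop))
    _ ≤ ∫⁻ θ in Icc (0 : ℝ) (1 / 2), ENNReal.ofReal (2 ^ d) * ∫⁻ z, F z * K θ z := by
        refine setLIntegral_mono' measurableSet_Icc fun θ hθ => ?_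
        have hθ1 : (0 : ℝ) < 1 - θ := by linarith [hθ.2]
        calc ∫⁻ X in cyl n 0 1, wt n α X * F ((1 - θ) • X + θ • Y)
            ≤ ∫⁻ X in cyl n 0 1, F ((1 - θ) • X + θ • Y) * K θ ((1 - θ) • X + θ • Y) := by
              refine setLIntegral_mono' (measurableSet_cyl 0 1) fun X hX => ?_
              have h1 : ((1 - θ) • X + θ • Y).2 = (1 - θ) * X.2 + θ * Y.2 := rfl
              have h2 : 0 < (1 - θ) * X.2 := mul_pos hθ1 hX.2.1
              have h3 : K θ ((1 - θ) • X + θ • Y) = wt n α X := by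
                simp only [K, h1]
                rw [if_pos (by linarith), add_sub_cancel_right, mul_div_cancel_left₀ _ hθ1.ne']
                rfl
              rw [h3, mul_comm]
          _ ≤ ∫⁻ X, F ((1 - θ) • X + θ • Y) * K θ ((1 - θ) • X + θ • Y) :=
              setLIntegral_le_lintegral _ _
          _ = ENNReal.ofReal (((1 - θ) ^ d)⁻¹) * ∫⁻ z, F z * K θ z :=
              lintegral_comp_smul_add volume hθ1 (θ • Y) (fun z => F z * K θ z)
          _ ≤ _ := by
              gcongr
              rw [← inv_pow]
              gcongr
              rw [inv_le_comm₀ hθ1 two_pos]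
              linarith [hθ.2]
    _ = ENNReal.ofReal (2 ^ d) * ∫⁻ θ in Icc (0 : ℝ) (1 / 2), ∫⁻ z, F z * K θ z := by
        refine lintegral_const_mul _ ?_
        exact Measurable.lintegral_prod_right' (f := fun p : ℝ × Pt n => F p.2 * K p.1 p.2)
          ((hF.comp measurable_snd).mul hK)
    _ = ENNReal.ofReal (2 ^ d) * ∫⁻ z, ∫⁻ θ in Icc (0 : ℝ) (1 / 2), F z * K θ z := by
        congr 1
        exact lintegral_lintegral_swap ((hF.comp measurable_snd).mul hK).aemeasurable
    _ ≤ ENNReal.ofReal (2 ^ d) *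
          ∫⁻ z, ENNReal.ofReal (4 / (α + 1)) * (F z * wt n (α + 1) z) := by
        gcongr with z
        by_cases hz : z ∈ cyl n 0 1
        · rw [lintegral_const_mul (F z) (f := fun θ => K θ z)
            (hK.comp (by fun_prop : Measurable fun θ : ℝ => (θ, z))), mul_left_comm]
          gcongr
          exact lintegral_hardy_kernel_le hα hα1 hz.2.1 hY
        · simp [hF0 z hz]
    _ = _ := by
        rw [lintegral_const_mul' _ _ ENNReal.ofReal_ne_top]

/-- The contribution to the segment average of `F` of the half of the segment far from `X`. -/
theorem lintegral_lintegral_far_le (hα : -1 < α) {F : Pt n → ℝ≥0∞}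
    (hF : Measurable F) :
    ∫⁻ Y in ball (0 : EuclideanSpace ℝ (Fin n)) 1 ×ˢ Ioo (1 / 2 : ℝ) 1,
        ∫⁻ X in cyl n 0 1, wt n α X *
          ∫⁻ θ in Icc (1 / 2 : ℝ) 1, F ((1 - θ) • X + θ • Y) ≤
      (∫⁻ X in cyl n 0 1, wt n α X) * (ENNReal.ofReal (2 ^ Module.finrank ℝ (Pt n)) *
        (ENNReal.ofReal (4 ^ (α + 1)) * ∫⁻ z, F z * wt n (α + 1) z)) := by
  set d := Module.finrank ℝ (Pt n)
  set R := ball (0 : EuclideanSpace ℝ (Fin n)) 1 ×ˢ Ioo (1 / 2 : ℝ) 1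
  have hR : MeasurableSet R := measurableSet_ball.prod measurableSet_Ioo
  have hmeas : Measurable fun p : (Pt n × Pt n) × ℝ =>
      F ((1 - p.2) • p.1.2 + p.2 • p.1.1) := hF.comp (by fun_prop)
  have hmeas2 : Measurable fun p : Pt n × Pt n =>
      ∫⁻ θ in Icc (1 / 2 : ℝ) 1, F ((1 - θ) • p.2 + θ • p.1) := hmeas.lintegral_prod_right'
  have key : ∀ X ∈ cyl n 0 1, ∀ θ ∈ Icc (1 / 2 : ℝ) 1,
      ∫⁻ Y in R, F ((1 - θ) • X + θ • Y) ≤ ENNReal.ofReal (2 ^ d) *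
        (ENNReal.ofReal (4 ^ (α + 1)) * ∫⁻ z, F z * wt n (α + 1) z) := by
    intro X hX θ hθ
    have hθ0 : 0 < θ := by linarith [hθ.1]
    let G : Pt n → ℝ≥0∞ := fun z => ENNReal.ofReal (4 ^ (α + 1)) * (F z * wt n (α + 1) z)
    calc ∫⁻ Y in R, F ((1 - θ) • X + θ • Y)
        ≤ ∫⁻ Y in R, G (θ • Y + (1 - θ) • X) := by
          refine setLIntegral_mono' hR fun Y hY => ?_
          rw [add_comm (θ • Y)]
          set z := (1 - θ) • X + θ • Y
          have hz : 1 / 4 ≤ z.2 := by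
            have h1 : z.2 = (1 - θ) * X.2 + θ * Y.2 := rfl
            have h2 : 0 ≤ (1 - θ) * X.2 := mul_nonneg (by linarith [hθ.2]) hX.2.1.le
            have h3 : (1 / 2 : ℝ) * (1 / 2) ≤ θ * Y.2 :=
              mul_le_mul hθ.1 hY.2.1.le (by norm_num) hθ0.le
            linarith
          have h1 : (1 : ℝ≥0∞) ≤ ENNReal.ofReal (4 ^ (α + 1)) * wt n (α + 1) z := by
            unfold wt
            rw [← ENNReal.ofReal_mul (by positivity), ← mul_rpow (by norm_num) (by linarith),
              ENNReal.one_le_ofReal]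
            exact one_le_rpow (by linarith) (by linarith)
          calc F z = F z * 1 := (mul_one _).symm
            _ ≤ F z * (ENNReal.ofReal (4 ^ (α + 1)) * wt n (α + 1) z) := by gcongr
            _ = G z := by simp only [G]; ring
      _ ≤ ∫⁻ Y, G (θ • Y + (1 - θ) • X) := setLIntegral_le_lintegral _ _
      _ = ENNReal.ofReal ((θ ^ d)⁻¹) * ∫⁻ z, G z :=
          lintegral_comp_smul_add volume hθ0 _ G
      _ ≤ ENNReal.ofReal (2 ^ d) * ∫⁻ z, G z := by
          gcongr
          rw [← inv_pow]
          gcongr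
          rw [inv_le_comm₀ hθ0 two_pos]
          linarith [hθ.1]
      _ = _ := by rw [lintegral_const_mul' _ _ ENNReal.ofReal_ne_top]
  rw [lintegral_lintegral_swap
    ((measurable_wt.comp measurable_snd).mul hmeas2).aemeasurable,
    ← lintegral_mul_const _ measurable_wt]
  refine setLIntegral_mono' (measurableSet_cyl 0 1) fun X hX => ?_
  rw [lintegral_const_mul' (wt n α X) _ ENNReal.ofReal_ne_top]
  gcongr
  rw [lintegral_lintegral_swap (f := fun Y θ => F ((1 - θ) • X + θ • Y))
    (hmeas.comp (by fun_prop : Measurable fun p : Pt n × ℝ => ((p.1, X), p.2))).aemeasurable]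
  refine (setLIntegral_mono' measurableSet_Icc (key X hX)).trans ?_
  rw [setLIntegral_const]
  refine mul_le_of_le_one_right zero_le ?_
  rw [Real.volume_Icc, ENNReal.ofReal_le_one]
  norm_num

theorem exists_poincare_cyl_one (n : ℕ) (hα : -1 < α) (hα1 : α ≤ 1) :
    ∃ C : ℝ≥0∞, C ≠ ∞ ∧ ∀ V : Pt n → ℝ, ContDiffOn ℝ 1 V (cyl n 0 1) →
      ∃ c : ℝ, ∫⁻ X in cyl n 0 1, wt n α X * ‖V X - c‖ₑ ≤
        C * ∫⁻ X in cyl n 0 1, ‖fderiv ℝ V X‖ₑ * wt n (α + 1) X := by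
  set d := Module.finrank ℝ (Pt n)
  set R := ball (0 : EuclideanSpace ℝ (Fin n)) 1 ×ˢ Ioo (1 / 2 : ℝ) 1
  have hRo : IsOpen R := isOpen_ball.prod isOpen_Ioo
  have hR0 : volume R ≠ 0 := (hRo.measure_pos volume
    ⟨(0, 3 / 4), mem_ball_self one_pos, by norm_num, by norm_num⟩).ne'
  have hRt : volume R ≠ ∞ := ((isBounded_ball.prod (isBounded_Ioo _ _)).measure_lt_top).ne
  refine ⟨2 * (ENNReal.ofReal (2 ^ d) * ENNReal.ofReal (4 / (α + 1)) +
    (∫⁻ X in cyl n 0 1, wt n α X) * (ENNReal.ofReal (2 ^ d) * ENNReal.ofReal (4 ^ (α + 1))) /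
      volume R), ?_, ?_⟩
  · have := lintegral_wt_cyl_one_ne_top (n := n) hα
    finiteness
  intro V hV
  let F : Pt n → ℝ≥0∞ := (cyl n 0 1).indicator fun X => ‖fderiv ℝ V X‖ₑ
  have hF : Measurable F := (measurable_fderiv ℝ V).enorm.indicator (measurableSet_cyl 0 1)
  have hF0 : ∀ z, z ∉ cyl n 0 1 → F z = 0 := fun z hz => indicator_of_notMem hz _
  have hJ : ∫⁻ X in cyl n 0 1, ‖fderiv ℝ V X‖ₑ * wt n (α + 1) X =
      ∫⁻ z, F z * wt n (α + 1) z := by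
    rw [← lintegral_indicator (measurableSet_cyl 0 1)]
    refine lintegral_congr fun z => ?_
    by_cases hz : z ∈ cyl n 0 1 <;> simp [F, hz]
  rw [hJ]
  set J := ∫⁻ z, F z * wt n (α + 1) z
  let far : Pt n → ℝ≥0∞ := fun Y => ∫⁻ X in cyl n 0 1, wt n α X *
    ∫⁻ θ in Icc (1 / 2 : ℝ) 1, F ((1 - θ) • X + θ • Y)
  have hmeas : Measurable fun p : (Pt n × Pt n) × ℝ =>
      F ((1 - p.2) • p.1.2 + p.2 • p.1.1) := hF.comp (by fun_prop)
  have hfar : Measurable far :=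
    ((measurable_wt.comp measurable_snd).mul hmeas.lintegral_prod_right').lintegral_prod_right'
  obtain ⟨Y, hYR, hY⟩ := exists_le_setLAverage hR0 hRt hfar.aemeasurable
  rw [setLAverage_eq] at hY
  have hYc : Y ∈ cyl n 0 1 := ⟨hYR.1, by linarith [hYR.2.1], hYR.2.2⟩
  refine ⟨V Y, ?_⟩
  have hpt : ∀ X ∈ cyl n 0 1, wt n α X * ‖V X - V Y‖ₑ ≤
      2 * (wt n α X * (∫⁻ θ in Icc (0 : ℝ) (1 / 2), F ((1 - θ) • X + θ • Y)) +
        wt n α X * ∫⁻ θ in Icc (1 / 2 : ℝ) 1, F ((1 - θ) • X + θ • Y)) := by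
    intro X hX
    have hnorm : ‖Y - X‖ₑ ≤ 2 := by
      rw [← ofReal_norm, ENNReal.ofReal_le_iff_le_toReal (by simp)]
      simp only [ENNReal.toReal_ofNat]
      refine max_le ?_ ?_
      · have h1 := mem_ball_zero_iff.1 hX.1
        have h2 := mem_ball_zero_iff.1 hYc.1
        calc ‖Y.1 - X.1‖ ≤ ‖Y.1‖ + ‖X.1‖ := norm_sub_le _ _
          _ ≤ 2 := by linarith
      · have h1 := hX.2
        have h2 := hYc.2
        change |Y.2 - X.2| ≤ 2
        rw [abs_le]
        constructor <;> linarith [h1.1, h1.2, h2.1, h2.2]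
    have h1 : ∫⁻ θ in Icc (0 : ℝ) 1, F ((1 - θ) • X + θ • Y) ≤
        (∫⁻ θ in Icc (0 : ℝ) (1 / 2), F ((1 - θ) • X + θ • Y)) +
          ∫⁻ θ in Icc (1 / 2 : ℝ) 1, F ((1 - θ) • X + θ • Y) := by
      rw [← Icc_union_Icc_eq_Icc (b := (1 / 2 : ℝ)) (by norm_num) (by norm_num)]
      exact lintegral_union_le _ _ _
    have h2 : ‖V X - V Y‖ₑ ≤ 2 * ∫⁻ θ in Icc (0 : ℝ) 1, F ((1 - θ) • X + θ • Y) := by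
      rw [enorm_sub_rev]
      refine (enorm_sub_le_lintegral_fderiv_segment (isOpen_cyl 0 1) (convex_cyl 0 1) hV hX
        hYc).trans ?_
      rw [← lintegral_const_mul' _ _ ENNReal.ofNat_ne_top]
      refine setLIntegral_mono' measurableSet_Icc fun θ hθ => ?_
      have hm : (1 - θ) • X + θ • Y ∈ cyl n 0 1 :=
        convex_cyl 0 1 hX hYc (by linarith [hθ.2]) hθ.1 (by ring)
      simp only [F, indicator_of_mem hm]
      rw [mul_comm]
      gcongr
    calc wt n α X * ‖V X - V Y‖ₑ ≤ wt n α X * (2 * _) :=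
          mul_le_mul_right (h2.trans (mul_le_mul_right h1 2)) _
      _ = _ := by ring
  refine (setLIntegral_mono' (measurableSet_cyl 0 1) hpt).trans ?_
  have hm1 : Measurable fun X : Pt n =>
      wt n α X * (∫⁻ θ in Icc (0 : ℝ) (1 / 2), F ((1 - θ) • X + θ • Y)) :=
    measurable_wt.mul (hF.comp
      (by fun_prop : Measurable fun p : Pt n × ℝ =>
        (1 - p.2) • p.1 + p.2 • Y)).lintegral_prod_right'
  rw [lintegral_const_mul' _ _ (by simp), lintegral_add_left hm1, mul_assoc]
  gcongr
  rw [add_mul]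
  gcongr
  · rw [mul_assoc]
    exact lintegral_wt_mul_lintegral_near_le hα hα1 hF hF0 hYR.2.1
  · refine hY.trans ?_
    refine (ENNReal.div_le_div_right (lintegral_lintegral_far_le hα hF) _).trans_eq ?_
    simp only [div_eq_mul_inv]
    ring

theorem lintegral_cyl_eq (y : EuclideanSpace ℝ (Fin n)) {r : ℝ} (hr : 0 < r)
    (G : Pt n → ℝ≥0∞) :
    ∫⁻ X in cyl n y r, G X = ENNReal.ofReal (r ^ Module.finrank ℝ (Pt n)) *
      ∫⁻ X in cyl n 0 1, G (r • X + (y, 0)) := by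
  have hmem : ∀ X : Pt n, r • X + (y, 0) ∈ cyl n y r ↔ X ∈ cyl n 0 1 := by
    rintro ⟨x, t⟩
    simp only [cyl, mem_prod, mem_ball, mem_Ioo, dist_eq_norm, sub_zero, Prod.smul_mk,
      Prod.mk_add_mk, add_sub_cancel_right, add_zero, norm_smul, Real.norm_of_nonneg hr.le,
      smul_eq_mul]
    refine and_congr ?_ (and_congr ?_ ?_)
    · exact mul_lt_iff_lt_one_right hr
    · exact mul_pos_iff_of_pos_left hr
    · exact mul_lt_iff_lt_one_right hr
  have h := lintegral_comp_smul_add volume hr (y, 0) ((cyl n y r).indicator G)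
  have h2 : (fun X => (cyl n y r).indicator G (r • X + (y, 0))) =
      (cyl n 0 1).indicator fun X => G (r • X + (y, 0)) := by
    funext X
    by_cases hX : X ∈ cyl n 0 1
    · rw [indicator_of_mem hX, indicator_of_mem ((hmem X).2 hX)]
    · rw [indicator_of_notMem hX, indicator_of_notMem (mt (hmem X).1 hX)]
  rw [h2, lintegral_indicator (measurableSet_cyl 0 1),
    lintegral_indicator (measurableSet_cyl y r)] at h
  rw [h, ← mul_assoc, ← ENNReal.ofReal_mul (by positivity), mul_inv_cancel₀ (by positivity),
    ENNReal.ofReal_one, one_mul]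

theorem wt_smul_add (y : EuclideanSpace ℝ (Fin n)) {r : ℝ} (hr : 0 < r) {X : Pt n}
    (hX : X ∈ cyl n 0 1) :
    wt n α (r • X + (y, 0)) = ENNReal.ofReal (r ^ α) * wt n α X := by
  have h : (r • X + (y, 0)).2 = r * X.2 := by simp
  rw [wt, wt, h, mul_rpow hr.le hX.2.1.le, ENNReal.ofReal_mul (by positivity)]

theorem lintegral_wt_cyl (y : EuclideanSpace ℝ (Fin n)) {r : ℝ} (hr : 0 < r) :
    ∫⁻ X in cyl n y r, wt n α X = ENNReal.ofReal (r ^ Module.finrank ℝ (Pt n)) *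
      (ENNReal.ofReal (r ^ α) * ∫⁻ X in cyl n 0 1, wt n α X) := by
  rw [lintegral_cyl_eq y hr]
  congr 1
  rw [← lintegral_const_mul' _ _ ENNReal.ofReal_ne_top]
  exact setLIntegral_congr_fun (measurableSet_cyl 0 1) fun X hX => wt_smul_add y hr hX

theorem lintegral_wt_cyl_two_mul (y : EuclideanSpace ℝ (Fin n)) {r : ℝ} (hr : 0 < r) :
    ∫⁻ X in cyl n y (2 * r), wt n α X =
      ENNReal.ofReal (2 ^ Module.finrank ℝ (Pt n) * 2 ^ α) * ∫⁻ X in cyl n y r, wt n α X := by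
  rw [lintegral_wt_cyl y hr, lintegral_wt_cyl y (by positivity), mul_pow,
    mul_rpow zero_le_two hr.le, ENNReal.ofReal_mul (by positivity),
    ENNReal.ofReal_mul (by positivity), ENNReal.ofReal_mul (by positivity)]
  ring

theorem lintegral_wt_cyl_ne_top (hα : -1 < α) (y : EuclideanSpace ℝ (Fin n)) {r : ℝ}
    (hr : 0 < r) : ∫⁻ X in cyl n y r, wt n α X ≠ ∞ := by
  rw [lintegral_wt_cyl y hr]
  have := lintegral_wt_cyl_one_ne_top (n := n) hα
  finiteness

theorem lintegral_wt_cyl_ne_zero (y : EuclideanSpace ℝ (Fin n)) {r : ℝ}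
    (hr : 0 < r) : ∫⁻ X in cyl n y r, wt n α X ≠ 0 := by
  rw [lintegral_wt_cyl y hr]
  refine mul_ne_zero ?_ (mul_ne_zero ?_ lintegral_wt_cyl_one_ne_zero)
  · exact (ENNReal.ofReal_pos.2 (by positivity)).ne'
  · exact (ENNReal.ofReal_pos.2 (by positivity)).ne'

/-- Weighted Poincaré inequality on boxes, with the gradient weighted by the height. -/
theorem exists_poincare_cyl (n : ℕ) (hα : -1 < α) (hα1 : α ≤ 1) :
    ∃ C : ℝ≥0∞, C ≠ ∞ ∧ ∀ (W : Pt n → ℝ) (y : EuclideanSpace ℝ (Fin n)) (r : ℝ), 0 < r →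
      ContDiffOn ℝ 1 W (cyl n y r) →
      ∃ c : ℝ, ∫⁻ X in cyl n y r, wt n α X * ‖W X - c‖ₑ ≤
        C * ∫⁻ X in cyl n y r, ‖fderiv ℝ W X‖ₑ * wt n (α + 1) X := by
  obtain ⟨C, hC, h⟩ := exists_poincare_cyl_one (α := α) n hα hα1
  refine ⟨C, hC, fun W y r hr hW => ?_⟩
  have hmaps : MapsTo (fun X : Pt n => r • X + (y, 0)) (cyl n 0 1) (cyl n y r) := by
    rintro ⟨x, t⟩ ⟨hx, ht⟩
    have hx' := mem_ball_zero_iff.1 hx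
    refine ⟨?_, ?_, ?_⟩
    · simpa [dist_eq_norm, norm_smul, abs_of_pos hr, mul_lt_iff_lt_one_right hr] using hx'
    · simpa using mul_pos hr ht.1
    · simpa [mul_lt_iff_lt_one_right hr] using ht.2
  obtain ⟨c, hc⟩ := h (fun X => W (r • X + (y, 0)))
    (hW.comp (by fun_prop : ContDiff ℝ 1 fun X : Pt n => r • X + (y, 0)).contDiffOn hmaps)
  refine ⟨c, ?_⟩
  have hfd : ∀ X : Pt n, ‖fderiv ℝ (fun X => W (r • X + (y, 0))) X‖ₑ =
      ENNReal.ofReal r * ‖fderiv ℝ W (r • X + (y, 0))‖ₑ := by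
    intro X
    rw [fderiv_comp_smul (f := fun X => W (X + (y, 0))), fderiv_comp_add_right, enorm_smul,
      Real.enorm_of_nonneg hr.le]
  have hL : ∫⁻ X in cyl n y r, wt n α X * ‖W X - c‖ₑ =
      ENNReal.ofReal (r ^ Module.finrank ℝ (Pt n)) * (ENNReal.ofReal (r ^ α) *
        ∫⁻ X in cyl n 0 1, wt n α X * ‖W (r • X + (y, 0)) - c‖ₑ) := by
    rw [lintegral_cyl_eq y hr]
    congr 1
    rw [← lintegral_const_mul' _ _ ENNReal.ofReal_ne_top]
    refine setLIntegral_congr_fun (measurableSet_cyl 0 1) fun X hX => ?_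
    simp only [wt_smul_add y hr hX, mul_assoc]
  have hR : ∫⁻ X in cyl n y r, ‖fderiv ℝ W X‖ₑ * wt n (α + 1) X =
      ENNReal.ofReal (r ^ Module.finrank ℝ (Pt n)) * (ENNReal.ofReal (r ^ α) *
        ∫⁻ X in cyl n 0 1, ‖fderiv ℝ (fun X => W (r • X + (y, 0))) X‖ₑ * wt n (α + 1) X) := by
    rw [lintegral_cyl_eq y hr]
    congr 1
    rw [← lintegral_const_mul' _ _ ENNReal.ofReal_ne_top]
    refine setLIntegral_congr_fun (measurableSet_cyl 0 1) fun X hX => ?_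
    simp only [wt_smul_add y hr hX, hfd, rpow_add_one hr.ne',
      ENNReal.ofReal_mul (rpow_nonneg hr.le α)]
    ring
  rw [hL, hR]
  calc _ ≤ ENNReal.ofReal (r ^ Module.finrank ℝ (Pt n)) * (ENNReal.ofReal (r ^ α) * (C * _)) := by
        gcongr
    _ = _ := by ring

theorem hasDerivAt_sq_max_zero (t : ℝ) :
    HasDerivAt (fun t : ℝ => max t 0 ^ 2) (2 * max t 0) t := by
  have hsq : HasDerivAt (fun t : ℝ => t ^ 2) (2 * t) t := by simpa using hasDerivAt_pow 2 t
  rcases lt_trichotomy t 0 with ht | rfl | ht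
  · rw [max_eq_right ht.le, mul_zero]
    refine (hasDerivAt_const t (0 : ℝ)).congr_of_eventuallyEq ?_
    filter_upwards [eventually_lt_nhds ht] with x hx
    simp [max_eq_right hx.le]
  · rw [max_self, mul_zero, ← hasDerivWithinAt_univ, ← Iic_union_Ici (a := (0 : ℝ))]
    refine HasDerivWithinAt.union ?_ ?_
    · refine (hasDerivWithinAt_const _ _ (0 : ℝ)).congr ?_ (by simp)
      intro x hx
      simp [max_eq_right (mem_Iic.1 hx)]
    · rw [mul_zero] at hsq
      refine hsq.hasDerivWithinAt.congr ?_ (by simp)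
      intro x hx
      simp [max_eq_left (mem_Ici.1 hx)]
  · rw [max_eq_left ht.le]
    refine hsq.congr_of_eventuallyEq ?_
    filter_upwards [eventually_gt_nhds ht] with x hx
    simp [max_eq_left hx.le]

theorem contDiff_sq_max_zero : ContDiff ℝ 1 (fun t : ℝ => max t 0 ^ 2) := by
  rw [contDiff_one_iff_deriv]
  refine ⟨fun t => (hasDerivAt_sq_max_zero t).differentiableAt, ?_⟩
  rw [funext fun t => (hasDerivAt_sq_max_zero t).deriv]
  fun_prop

/-- The Euclidean inner product of two covectors on `ℝⁿ × ℝ`. -/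
def covDot (n : ℕ) (L M : Pt n →L[ℝ] ℝ) : ℝ :=
  (∑ i : Fin n, L (EuclideanSpace.single i (1 : ℝ), (0 : ℝ)) *
      M (EuclideanSpace.single i (1 : ℝ), (0 : ℝ)))
    + L ((0 : EuclideanSpace ℝ (Fin n)), (1 : ℝ)) * M ((0 : EuclideanSpace ℝ (Fin n)), (1 : ℝ))

theorem covDot_self_nonneg (L : Pt n →L[ℝ] ℝ) : 0 ≤ covDot n L L :=
  add_nonneg (Finset.sum_nonneg fun _ _ => mul_self_nonneg _) (mul_self_nonneg _)

theorem norm_single_zero (i : Fin n) :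
    ‖((EuclideanSpace.single i (1 : ℝ), (0 : ℝ)) : Pt n)‖ = 1 := by
  simp [Prod.norm_def]

theorem norm_zero_one : ‖((0, 1) : Pt n)‖ = 1 := by
  simp [Prod.norm_def]

theorem covDot_self_le (L : Pt n →L[ℝ] ℝ) : covDot n L L ≤ (n + 1) * ‖L‖ ^ 2 := by
  have h : ∀ v : Pt n, ‖v‖ = 1 → L v * L v ≤ ‖L‖ ^ 2 := by
    intro v hv
    have h1 := L.le_opNorm v
    rw [hv, mul_one, Real.norm_eq_abs] at h1
    calc L v * L v = |L v| ^ 2 := by rw [sq_abs, sq]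
      _ ≤ ‖L‖ ^ 2 := by gcongr
  calc covDot n L L ≤ (∑ _i : Fin n, ‖L‖ ^ 2) + ‖L‖ ^ 2 :=
        add_le_add (Finset.sum_le_sum fun i _ => h _ (norm_single_zero i)) (h _ norm_zero_one)
    _ = _ := by simp; ring

theorem norm_sq_le_covDot_self (L : Pt n →L[ℝ] ℝ) : ‖L‖ ^ 2 ≤ (n + 1) * covDot n L L := by
  set D := covDot n L L
  let f : Option (Fin n) → ℝ := fun o => o.elim |L (0, 1)|
    fun i => |L (EuclideanSpace.single i (1 : ℝ), (0 : ℝ))|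
  have hf : ∑ o, f o ^ 2 = D := by
    rw [Fintype.sum_option, add_comm]
    simp [f, D, covDot, sq]
  have hS : (∑ o, f o) ^ 2 ≤ (n + 1) * D := by
    have := sq_sum_le_card_mul_sum_sq (s := Finset.univ) (f := f)
    rw [hf] at this
    simpa using this
  have hf0 : 0 ≤ ∑ o, f o := Finset.sum_nonneg fun o _ => by cases o <;> simp [f]
  refine le_trans ?_ hS
  gcongr
  refine L.opNorm_le_bound hf0 fun v => ?_
  have hv : v = (∑ i, v.1 i • ((EuclideanSpace.single i (1 : ℝ), (0 : ℝ)) : Pt n)) +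
      v.2 • ((0, 1) : Pt n) := by
    refine Prod.ext ?_ ?_
    · simp only [Prod.fst_add, Prod.fst_sum, Prod.smul_fst, smul_zero, add_zero]
      ext j
      simp [Pi.single_apply]
    · simp [Prod.snd_sum]
  calc ‖L v‖ = ‖(∑ i, v.1 i * L (EuclideanSpace.single i (1 : ℝ), (0 : ℝ))) +
          v.2 * L (0, 1)‖ := by
        conv_lhs => rw [hv]
        simp only [map_add, map_sum, map_smul, smul_eq_mul]
    _ ≤ (∑ i, ‖v‖ * |L (EuclideanSpace.single i (1 : ℝ), (0 : ℝ))|) + ‖v‖ * |L (0, 1)| := by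
        refine (norm_add_le _ _).trans (add_le_add ((norm_sum_le _ _).trans
          (Finset.sum_le_sum fun i _ => ?_)) ?_)
        · rw [norm_mul]
          exact mul_le_mul_of_nonneg_right
            ((PiLp.norm_apply_le v.1 i).trans (norm_fst_le v)) (norm_nonneg _)
        · rw [norm_mul]
          exact mul_le_mul_of_nonneg_right (norm_snd_le v) (norm_nonneg _)
    _ = (∑ o, f o) * ‖v‖ := by
        rw [Fintype.sum_option, ← Finset.mul_sum]
        simp only [f, Option.elim]
        ring

/-- Young's inequality behind the logarithmic Caccioppoli estimate: here `L` and `L'` stand for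
the gradients of `U` and of the test function `η² / P`, with `η = g` and `∇η = q`. -/
theorem sq_mul_covDot_le (L L' q : Pt n →L[ℝ] ℝ) {g P : ℝ}
    (hL' : L' = P⁻¹ • ((2 * g) • q) - (g ^ 2 * (P ^ 2)⁻¹) • L) :
    g ^ 2 * covDot n (P⁻¹ • L) (P⁻¹ • L) ≤ -2 * covDot n L L' + 4 * covDot n q q := by
  have h : ∀ v : Pt n, g ^ 2 * ((P⁻¹ • L) v * (P⁻¹ • L) v) ≤
      -2 * (L v * L' v) + 4 * (q v * q v) := by
    intro v
    have hv : L' v = P⁻¹ * (2 * g * q v) - g ^ 2 * (P⁻¹) ^ 2 * L v := by simp [hL']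
    have hv2 : (P⁻¹ • L) v = P⁻¹ * L v := rfl
    rw [hv, hv2]
    nlinarith [sq_nonneg (g * (P⁻¹ * L v) - 2 * q v)]
  simp only [covDot, mul_add, Finset.mul_sum]
  have h1 := Finset.sum_le_sum fun (i : Fin n) (_ : i ∈ Finset.univ) =>
    h (EuclideanSpace.single i (1 : ℝ), (0 : ℝ))
  rw [Finset.sum_add_distrib] at h1
  have h2 := h (0, 1)
  linarith

theorem continuous_covDot :
    Continuous fun p : (Pt n →L[ℝ] ℝ) × (Pt n →L[ℝ] ℝ) => covDot n p.1 p.2 := by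
  unfold covDot
  fun_prop

theorem isOpen_Q (R : ℝ) : IsOpen (Q n R) := isOpen_ball.prod isOpen_Ioo

theorem IsWeakSupersol.integral_nonneg {σ : ℝ} {U : Pt n → ℝ}
    {a b : EuclideanSpace ℝ (Fin n) → ℝ} (h : IsWeakSupersol n σ U a b) {φ : Pt n → ℝ}
    (hφ : ContDiff ℝ 1 φ) (hc : HasCompactSupport φ) (hs : tsupport φ ⊆ Q n 1)
    (h0 : ∀ X, 0 ≤ φ X) :
    0 ≤ ∫ X in Q n 1, X.2 ^ (1 - 2 * σ) * gradDot n U φ X := by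
  have h1 := h φ hφ hc (hs.trans subset_union_left) h0
  have h2 : ∀ x, φ (x, 0) = 0 := fun x => image_eq_zero_of_notMem_tsupport fun hx =>
    lt_irrefl _ (hs hx).2.1
  simp only [h2, mul_zero, integral_zero, add_zero] at h1
  linarith

theorem contDiffOn_log_add {U : Pt n → ℝ} {S : Set (Pt n)} {k : ℝ} (hU : ContDiffOn ℝ 1 U S)
    (hU0 : ∀ X ∈ S, 0 ≤ U X) (hk : 0 < k) :
    ContDiffOn ℝ 1 (fun X => Real.log (U X + k)) S :=
  (hU.add contDiffOn_const).log fun X hX => by linarith [hU0 X hX]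

set_option maxHeartbeats 1000000 in
theorem caccioppoli_truncated {σ : ℝ} {β : ContDiffBump (0 : Pt n)} (hβi : β.rIn = 1)
    (hβo : β.rOut = 3 / 2) {K : ℝ} (hK : ∀ X, ‖fderiv ℝ β X‖ ≤ K) {U : Pt n → ℝ}
    {a b : EuclideanSpace ℝ (Fin n) → ℝ} {k : ℝ} (hU : ContDiffOn ℝ 1 U (Q n 1))
    (hU0 : ∀ X ∈ Q n 1, 0 ≤ U X) (hk : 0 < k) (hsup : IsWeakSupersol n σ U a b)
    {y : EuclideanSpace ℝ (Fin n)} {r : ℝ} (hr : 0 < r) (hsub : cyl n y (2 * r) ⊆ Q n 1)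
    {ε : ℝ} (hε : 0 < ε) :
    ∫⁻ X in cyl n y r ∩ {X | 2 * ε ≤ X.2}, ENNReal.ofReal (X.2 ^ 2) *
        ‖fderiv ℝ (fun X => Real.log (U X + k)) X‖ₑ ^ 2 * wt n (1 - 2 * σ) X ≤
      ENNReal.ofReal (4 * (n + 1)) * (ENNReal.ofReal (4 * ((n + 1) * (1 + 2 * K) ^ 2)) *
        ∫⁻ X in cyl n y (2 * r), wt n (1 - 2 * σ) X) := by
  set α := 1 - 2 * σ
  have hK0 : 0 ≤ K := (norm_nonneg _).trans (hK 0)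
  let ψ : Pt n → ℝ := fun X => β (r⁻¹ • (X - (y, 0)))
  let s : Pt n → ℝ := fun X => max (X.2 - ε) 0
  let ζ : Pt n → ℝ := fun X => s X ^ 2 * ψ X ^ 2
  let φ : Pt n → ℝ := fun X => ζ X * (U X + k)⁻¹
  let q : Pt n → Pt n →L[ℝ] ℝ := fun X =>
    ψ X • ContinuousLinearMap.snd ℝ (EuclideanSpace ℝ (Fin n)) ℝ + s X • fderiv ℝ ψ X
  let Kc : Set (Pt n) := closedBall y (3 / 2 * r) ×ˢ Icc ε (3 / 2 * r)
  have hKcompact : IsCompact Kc := (isCompact_closedBall _ _).prod isCompact_Icc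
  have hKm : MeasurableSet Kc := hKcompact.measurableSet
  have hKcyl : Kc ⊆ cyl n y (2 * r) := by
    rintro X ⟨h1, h2⟩
    refine ⟨(mem_closedBall.1 h1).trans_lt (by linarith), by linarith [h2.1], by linarith [h2.2]⟩
  have hKQ : Kc ⊆ Q n 1 := hKcyl.trans hsub
  have hP : ∀ X ∈ Q n 1, 0 < U X + k := fun X hX => by linarith [hU0 X hX]
  have hψc : ContDiff ℝ 1 ψ := β.contDiff.comp (by fun_prop)
  have hsc : ContDiff ℝ 1 (fun X : Pt n => s X ^ 2) :=
    contDiff_sq_max_zero.comp (by fun_prop : ContDiff ℝ 1 fun X : Pt n => X.2 - ε)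
  have hζc : ContDiff ℝ 1 ζ := hsc.mul (hψc.pow 2)
  have hψ1 : ∀ X, |ψ X| ≤ 1 := fun X => by
    rw [abs_of_nonneg β.nonneg]; exact β.le_one
  have hfψ : ∀ X, ‖fderiv ℝ ψ X‖ ≤ r⁻¹ * K := by
    intro X
    have h1 : fderiv ℝ ψ X = r⁻¹ • fderiv ℝ β (r⁻¹ • (X - (y, 0))) := by
      simp only [ψ]
      rw [fderiv_comp_sub (f := fun X => β (r⁻¹ • X)), fderiv_comp_smul]
    rw [h1, norm_smul, Real.norm_of_nonneg (by positivity)]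
    gcongr
    exact hK _
  have hζK : ∀ X, X ∉ Kc → ζ X = 0 := by
    intro X hX
    by_contra hne
    have h1 : s X ≠ 0 := fun h => hne (by simp [ζ, h])
    have h2 : ψ X ≠ 0 := fun h => hne (by simp [ζ, h])
    have h3 : ε < X.2 := by
      by_contra h
      exact h1 (max_eq_right (by linarith))
    have h4 : r⁻¹ • (X - (y, 0)) ∈ ball (0 : Pt n) (3 / 2) := by
      rw [← hβo, ← β.support_eq]
      exact h2
    rw [mem_ball_zero_iff, norm_smul, Real.norm_of_nonneg (by positivity),
      inv_mul_lt_iff₀ hr] at h4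
    refine hX ⟨?_, h3.le, ?_⟩
    · rw [mem_closedBall, dist_eq_norm]
      have := norm_fst_le (X - (y, 0))
      simp only [Prod.fst_sub] at this
      linarith
    · have := norm_snd_le (X - (y, 0))
      simp only [Prod.snd_sub, sub_zero, Real.norm_eq_abs] at this
      linarith [le_abs_self X.2]
  have hφt : tsupport φ ⊆ Kc :=
    closure_minimal (fun X hX => by_contra fun h => hX (by simp [φ, hζK X h]))
      hKcompact.isClosed
  have hφs : HasCompactSupport φ := hKcompact.of_isClosed_subset (isClosed_tsupport φ) hφt
  have hUat : ∀ X ∈ Q n 1, ContDiffAt ℝ 1 U X := fun X hX =>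
    hU.contDiffAt ((isOpen_Q 1).mem_nhds hX)
  have hφc : ContDiff ℝ 1 φ := by
    rw [contDiff_iff_contDiffAt]
    intro X
    by_cases hX : X ∈ Q n 1
    · exact hζc.contDiffAt.mul (((hUat X hX).add contDiffAt_const).inv (hP X hX).ne')
    · have h1 : φ =ᶠ[nhds X] fun _ => 0 :=
        notMem_tsupport_iff_eventuallyEq.1 fun h => hX (hKQ (hφt h))
      exact contDiffAt_const.congr_of_eventuallyEq h1
  have hφ0 : ∀ X, 0 ≤ φ X := by
    intro X
    by_cases hX : X ∈ Q n 1
    · exact mul_nonneg (by positivity) (inv_nonneg.2 (hP X hX).le)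
    · simp [φ, hζK X fun h => hX (hKQ h)]
  have hweak := hsup.integral_nonneg hφc hφs (hφt.trans hKQ) hφ0
  let f : Pt n → ℝ := fun X => X.2 ^ α * gradDot n U φ X
  have hfK : ∫ X in Q n 1, f X = ∫ X in Kc, f X := by
    refine (setIntegral_eq_of_subset_of_forall_sdiff_eq_zero (isOpen_Q 1).measurableSet hKQ ?_)
    intro X hX
    have h1 : fderiv ℝ φ X = 0 := by
      have h2 : φ =ᶠ[nhds X] fun _ => 0 :=
        notMem_tsupport_iff_eventuallyEq.1 fun h => hX.2 (hφt h)
      rw [h2.fderiv_eq]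
      simp
    simp [f, gradDot, h1]
  have hwK : ContinuousOn (fun X : Pt n => X.2 ^ α) Kc :=
    continuousOn_snd.rpow_const fun X hX => Or.inl (by linarith [hX.2.1])
  have hwi : IntegrableOn (fun X : Pt n => X.2 ^ α) Kc := hwK.integrableOn_compact hKcompact
  have hgd : ContinuousOn (fun X => gradDot n U φ X) Kc :=
    continuous_covDot.comp_continuousOn
      (((hU.continuousOn_fderiv_of_isOpen (isOpen_Q 1) le_rfl).mono hKQ).prodMk
        (hφc.continuous_fderiv one_ne_zero).continuousOn)
  have hfc : ContinuousOn f Kc := hwK.mul hgd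
  have hfi : IntegrableOn f Kc := hfc.integrableOn_compact hKcompact
  have hfdU : ∀ X ∈ Q n 1, HasFDerivAt U (fderiv ℝ U X) X := fun X hX =>
    ((hUat X hX).differentiableAt one_ne_zero).hasFDerivAt
  have hfdW : ∀ X ∈ Q n 1, fderiv ℝ (fun X => Real.log (U X + k)) X =
      (U X + k)⁻¹ • fderiv ℝ U X := fun X hX =>
    (((hfdU X hX).add_const k).log (hP X hX).ne').fderiv
  have hfdζ : ∀ X, HasFDerivAt ζ ((2 * (s X * ψ X)) • q X) X := by
    intro X
    have h1 : HasFDerivAt (fun X : Pt n => X.2 - ε)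
        (ContinuousLinearMap.snd ℝ (EuclideanSpace ℝ (Fin n)) ℝ) X :=
      hasFDerivAt_snd.sub_const ε
    have h2 := (hasDerivAt_sq_max_zero (X.2 - ε)).comp_hasFDerivAt X h1
    have h3 := ((hψc.differentiable one_ne_zero X).hasFDerivAt).pow 2
    refine (h2.mul h3).congr_fderiv ?_
    ext v <;> simp [q, s] <;> ring
  have hfdφ : ∀ X ∈ Q n 1, fderiv ℝ φ X = (U X + k)⁻¹ • ((2 * (s X * ψ X)) • q X) -
      ((s X * ψ X) ^ 2 * ((U X + k) ^ 2)⁻¹) • fderiv ℝ U X := by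
    intro X hX
    have h1 := (hasDerivAt_inv (hP X hX).ne').comp_hasFDerivAt X ((hfdU X hX).add_const k)
    have h2 : HasFDerivAt φ _ X := (hfdζ X).mul h1
    rw [h2.fderiv]
    ext v <;> simp [ζ] <;> ring
  have hq : ∀ X ∈ Kc, ‖q X‖ ≤ 1 + 2 * K := by
    intro X hX
    have hs0 : 0 ≤ s X := le_max_right _ _
    have hs1 : s X ≤ 2 * r := max_le (by linarith [hX.2.2]) (by linarith)
    calc ‖q X‖ ≤ ‖ψ X • ContinuousLinearMap.snd ℝ (EuclideanSpace ℝ (Fin n)) ℝ‖ +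
          ‖s X • fderiv ℝ ψ X‖ := norm_add_le _ _
      _ ≤ 1 * 1 + (2 * r) * (r⁻¹ * K) := by
          rw [norm_smul, norm_smul, Real.norm_of_nonneg hs0]
          gcongr
          · exact hψ1 X
          · exact ContinuousLinearMap.norm_snd_le _ _ _
          · exact hfψ X
      _ = 1 + 2 * K := by field_simp
  set m := 4 * ((n + 1 : ℝ) * (1 + 2 * K) ^ 2)
  have hm : 0 ≤ m := by positivity
  let T : Pt n → ℝ := fun X => X.2 ^ α * ((s X * ψ X) ^ 2 *
    covDot n (fderiv ℝ (fun X => Real.log (U X + k)) X)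
      (fderiv ℝ (fun X => Real.log (U X + k)) X))
  have hT : ∀ X ∈ Kc, T X ≤ -2 * f X + m * X.2 ^ α := by
    intro X hX
    have h1 := sq_mul_covDot_le (fderiv ℝ U X) (fderiv ℝ φ X) (q X) (hfdφ X (hKQ hX))
    have h2 : covDot n (q X) (q X) ≤ (n + 1) * (1 + 2 * K) ^ 2 := by
      refine (covDot_self_le _).trans ?_
      gcongr
      exact hq X hX
    have h3 : 0 ≤ X.2 ^ α := rpow_nonneg (by linarith [hX.2.1]) _
    simp only [T, hfdW X (hKQ hX)]
    calc _ ≤ X.2 ^ α * (-2 * covDot n (fderiv ℝ U X) (fderiv ℝ φ X) + m) := by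
          gcongr
          linarith
      _ = -2 * f X + m * X.2 ^ α := by
          simp only [f, show gradDot n U φ X = covDot n (fderiv ℝ U X) (fderiv ℝ φ X) from rfl]
          ring
  have hT0 : ∀ X ∈ Kc, 0 ≤ T X := fun X hX =>
    mul_nonneg (rpow_nonneg (by linarith [hX.2.1]) _)
      (mul_nonneg (sq_nonneg _) (covDot_self_nonneg _))
  have hTint : ∫⁻ X in Kc, ENNReal.ofReal (T X) ≤
      ENNReal.ofReal m * ∫⁻ X in cyl n y (2 * r), wt n α X := by
    calc ∫⁻ X in Kc, ENNReal.ofReal (T X)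
        ≤ ∫⁻ X in Kc, ENNReal.ofReal (-2 * f X + m * X.2 ^ α) :=
          setLIntegral_mono' hKm fun X hX => ENNReal.ofReal_le_ofReal (hT X hX)
      _ = ENNReal.ofReal (∫ X in Kc, (-2 * f X + m * X.2 ^ α)) := by
          refine (ofReal_integral_eq_lintegral_ofReal
            ((hfi.const_mul _).add (hwi.const_mul _)) ?_).symm
          filter_upwards [ae_restrict_mem hKm] with X hX using (hT0 X hX).trans (hT X hX)
      _ ≤ ENNReal.ofReal (m * ∫ X in Kc, X.2 ^ α) := by
          apply ENNReal.ofReal_le_ofReal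
          rw [integral_add (hfi.const_mul _) (hwi.const_mul _), integral_const_mul,
            integral_const_mul, ← hfK]
          linarith
      _ = ENNReal.ofReal m * ∫⁻ X in Kc, wt n α X := by
          rw [ENNReal.ofReal_mul hm, ofReal_integral_eq_lintegral_ofReal hwi ?_]
          · rfl
          · filter_upwards [ae_restrict_mem hKm] with X hX
            exact rpow_nonneg (by linarith [hX.2.1]) _
      _ ≤ _ := by
          gcongr
  refine le_trans ?_ (mul_le_mul_right hTint _)
  have hA : cyl n y r ∩ {X | 2 * ε ≤ X.2} ⊆ Kc := by
    rintro X ⟨⟨h1, h2⟩, h3⟩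
    have h3' : 2 * ε ≤ X.2 := h3
    exact ⟨(mem_ball.1 h1).le.trans (by linarith), by linarith, by linarith [h2.2]⟩
  have hAm : MeasurableSet (cyl n y r ∩ {X : Pt n | 2 * ε ≤ X.2}) :=
    (measurableSet_cyl y r).inter (measurableSet_le measurable_const measurable_snd)
  rw [← lintegral_const_mul' _ _ ENNReal.ofReal_ne_top]
  refine le_trans (setLIntegral_mono' hAm fun X hX => ?_) (lintegral_mono_set hA)
  have ht : 2 * ε ≤ X.2 := hX.2
  have hψX : ψ X = 1 := by
    refine β.one_of_mem_closedBall ?_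
    rw [hβi, mem_closedBall_zero_iff, norm_smul, Real.norm_of_nonneg (by positivity),
      inv_mul_le_iff₀ hr, mul_one]
    refine max_le ?_ ?_
    · have := mem_ball.1 hX.1.1
      rw [dist_eq_norm] at this
      exact this.le
    · simp only [Prod.snd_sub, sub_zero, Real.norm_eq_abs, abs_of_pos hX.1.2.1]
      exact hX.1.2.2.le
  have hsX : s X = X.2 - ε := max_eq_left (by linarith)
  rw [← ofReal_norm, ← ENNReal.ofReal_pow (norm_nonneg _), wt,
    ← ENNReal.ofReal_mul (by positivity), ← ENNReal.ofReal_mul (by positivity),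
    ← ENNReal.ofReal_mul (by positivity)]
  apply ENNReal.ofReal_le_ofReal
  simp only [T, hψX, hsX, mul_one]
  set D := fderiv ℝ (fun X => Real.log (U X + k)) X
  have h1 := norm_sq_le_covDot_self D
  have h2 : X.2 ^ 2 ≤ 4 * (X.2 - ε) ^ 2 := by nlinarith
  have h3 : 0 ≤ X.2 ^ α := rpow_nonneg hX.1.2.1.le _
  calc X.2 ^ 2 * ‖D‖ ^ 2 * X.2 ^ α
      ≤ (4 * (X.2 - ε) ^ 2) * ((n + 1) * covDot n D D) * X.2 ^ α := by gcongr
    _ = _ := by ring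

theorem exists_caccioppoli (n : ℕ) (σ : ℝ) :
    ∃ C : ℝ≥0∞, C ≠ ∞ ∧ ∀ (U : Pt n → ℝ) (a b : EuclideanSpace ℝ (Fin n) → ℝ) (k : ℝ),
      ContDiffOn ℝ 1 U (Q n 1) → (∀ X ∈ Q n 1, 0 ≤ U X) → 0 < k → IsWeakSupersol n σ U a b →
      ∀ (y : EuclideanSpace ℝ (Fin n)) (r : ℝ), 0 < r → cyl n y (2 * r) ⊆ Q n 1 →
        ∫⁻ X in cyl n y r, ENNReal.ofReal (X.2 ^ 2) *
            ‖fderiv ℝ (fun X => Real.log (U X + k)) X‖ₑ ^ 2 * wt n (1 - 2 * σ) X ≤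
          C * ∫⁻ X in cyl n y (2 * r), wt n (1 - 2 * σ) X := by
  let β : ContDiffBump (0 : Pt n) := ⟨1, 3 / 2, one_pos, by norm_num⟩
  obtain ⟨K, hK⟩ := (β.hasCompactSupport.fderiv (𝕜 := ℝ)).exists_bound_of_continuous
    (β.contDiff.continuous_fderiv (n := 1) one_ne_zero)
  refine ⟨ENNReal.ofReal (4 * (n + 1)) * ENNReal.ofReal (4 * ((n + 1) * (1 + 2 * K) ^ 2)),
    by finiteness, ?_⟩
  intro U a b k hU hU0 hk hsup y r hr hsub
  let A : ℕ → Set (Pt n) := fun j => cyl n y r ∩ {X | 2 * (1 / ((j : ℝ) + 1)) ≤ X.2}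
  have hA : cyl n y r = ⋃ j, A j := by
    refine Subset.antisymm (fun X hX => ?_) (iUnion_subset fun j => inter_subset_left)
    obtain ⟨j, hj⟩ := exists_nat_one_div_lt (half_pos hX.2.1)
    refine mem_iUnion.2 ⟨j, hX, ?_⟩
    change 2 * (1 / ((j : ℝ) + 1)) ≤ X.2
    linarith
  have hmono : Monotone A := by
    intro i j hij
    refine inter_subset_inter_right _ fun X (hX : 2 * (1 / ((i : ℝ) + 1)) ≤ X.2) => ?_
    change 2 * (1 / ((j : ℝ) + 1)) ≤ X.2
    refine le_trans ?_ hX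
    gcongr
  rw [hA, setLIntegral_iUnion_of_directed _ hmono.directed_le, mul_assoc]
  exact iSup_le fun j =>
    caccioppoli_truncated rfl rfl hK hU hU0 hk hsup hr hsub (by positivity)

end Cylinder

theorem enorm_mul_wt_add_one_le {n : ℕ} {α : ℝ} {E : Type*} [NormedAddCommGroup E] (v : E)
    {X : Pt n} (hX : 0 < X.2) :
    ‖v‖ₑ * wt n (α + 1) X ≤ wt n α X + ENNReal.ofReal (X.2 ^ 2) * ‖v‖ₑ ^ 2 * wt n α X := by
  have hw : 0 ≤ X.2 ^ α := rpow_nonneg hX.le _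
  simp only [wt]
  rw [← ofReal_norm, ← ENNReal.ofReal_pow (norm_nonneg _),
    ← ENNReal.ofReal_mul (norm_nonneg _), ← ENNReal.ofReal_mul (by positivity),
    ← ENNReal.ofReal_mul (by positivity), ← ENNReal.ofReal_add hw (by positivity)]
  apply ENNReal.ofReal_le_ofReal
  rw [rpow_add_one hX.ne']
  have h : X.2 * ‖v‖ ≤ 1 + X.2 ^ 2 * ‖v‖ ^ 2 := by
    nlinarith [sq_nonneg (X.2 * ‖v‖ - 1), sq_nonneg (X.2 * ‖v‖)]
  nlinarith [mul_le_mul_of_nonneg_left h hw]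

/-- **BMO estimate for `W = log(U + k)`** with respect to the weight
`ω(X) = t^{1−2σ}`: if `U ≥ 0` is a weak supersolution with finite weighted energy
and `k ≥ ‖b‖_{L^∞(B₁)}`, `k > 0`, then for every box `Q_r(y) = B_r(y) × (0, r)`
with `B_{2r}(y) × (0, 2r) ⊆ Q₁`,
`ω(Q_r(y))⁻¹ ∫_{Q_r(y)} |W − W_{y,r}| ω ≤ C`, where
`W_{y,r} = ω(Q_r(y))⁻¹ ∫_{Q_r(y)} W ω` and `C = C(n, σ, ‖a‖_{L^∞(B₁)})`. -/
theorem log_bmo (n : ℕ) (hn : 2 ≤ n) (σ : ℝ) (hσ0 : 0 < σ) (hσ1 : σ < 1)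
    (Ma : ℝ) :
    ∃ C > 0, ∀ (U : Pt n → ℝ) (a b : EuclideanSpace ℝ (Fin n) → ℝ) (Mb k : ℝ),
      ContDiffOn ℝ 1 U (Q n 1 ∪ Q' n 1) →
      (∀ X ∈ Q n 1 ∪ Q' n 1, 0 ≤ U X) →
      IntegrableOn (fun X : Pt n =>
        X.2 ^ (1 - 2 * σ) * ((U X) ^ 2 + ‖fderiv ℝ U X‖ ^ 2)) (Q n 1) →
      Measurable a → Measurable b →
      (∀ x ∈ ball (0 : EuclideanSpace ℝ (Fin n)) 1, |a x| ≤ Ma) →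
      (∀ x ∈ ball (0 : EuclideanSpace ℝ (Fin n)) 1, |b x| ≤ Mb) →
      IsWeakSupersol n σ U a b →
      0 < k → Mb ≤ k →
      ∀ (y : EuclideanSpace ℝ (Fin n)) (r : ℝ), 0 < r →
        y ∈ ball (0 : EuclideanSpace ℝ (Fin n)) 1 →
        (ball y (2 * r)) ×ˢ (Ioo (0 : ℝ) (2 * r)) ⊆ Q n 1 →
        (∫ X in (ball y r) ×ˢ (Ioo (0 : ℝ) r),
            |Real.log (U X + k) -
              (∫ Y in (ball y r) ×ˢ (Ioo (0 : ℝ) r),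
                  Real.log (U Y + k) * Y.2 ^ (1 - 2 * σ)) /
                (∫ Y in (ball y r) ×ˢ (Ioo (0 : ℝ) r), Y.2 ^ (1 - 2 * σ))|
              * X.2 ^ (1 - 2 * σ)) /
          (∫ Y in (ball y r) ×ˢ (Ioo (0 : ℝ) r), Y.2 ^ (1 - 2 * σ)) ≤ C := by
  have hα : -1 < 1 - 2 * σ := by linarith
  obtain ⟨C₁, hC₁, hpoin⟩ := exists_poincare_cyl n hα (by linarith)
  obtain ⟨C₂, hC₂, hcacc⟩ := exists_caccioppoli n σ
  set D := ENNReal.ofReal (2 ^ Module.finrank ℝ (Pt n) * 2 ^ (1 - 2 * σ))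
  set C₃ := C₁ * (1 + C₂ * D)
  have hC₃ : C₃ ≠ ∞ := ENNReal.mul_ne_top hC₁
    (ENNReal.add_ne_top.2 ⟨ENNReal.one_ne_top, ENNReal.mul_ne_top hC₂ ENNReal.ofReal_ne_top⟩)
  refine ⟨2 * C₃.toReal + 1, by positivity, ?_⟩
  intro U a b Mb k hU hU0 _ _ _ _ _ hsup hk _ y r hr _ hsub
  have hUQ : ContDiffOn ℝ 1 U (Q n 1) := hU.mono subset_union_left
  have hUQ0 : ∀ X ∈ Q n 1, 0 ≤ U X := fun X hX => hU0 X (Or.inl hX)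
  have hcyl : cyl n y r ⊆ Q n 1 := by
    refine Subset.trans ?_ hsub
    exact prod_mono (ball_subset_ball (by linarith)) (Ioo_subset_Ioo_right (by linarith))
  have hW : ContDiffOn ℝ 1 (fun X => Real.log (U X + k)) (cyl n y r) :=
    (contDiffOn_log_add hUQ hUQ0 hk).mono hcyl
  obtain ⟨c, hc⟩ := hpoin _ y r hr hW
  have hpos : ∀ X ∈ cyl n y r, 0 < X.2 := fun X hX => hX.2.1
  have hw0 : 0 ≤ᵐ[volume.restrict (cyl n y r)] fun X : Pt n => X.2 ^ (1 - 2 * σ) := by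
    filter_upwards [ae_restrict_mem (measurableSet_cyl y r)] with X hX
      using rpow_nonneg (hpos X hX).le _
  have hwm : Measurable fun X : Pt n => X.2 ^ (1 - 2 * σ) := measurable_snd.pow_const _
  have hwi : IntegrableOn (fun X : Pt n => X.2 ^ (1 - 2 * σ)) (cyl n y r) :=
    ⟨hwm.aestronglyMeasurable, (hasFiniteIntegral_iff_ofReal hw0).2
      (lintegral_wt_cyl_ne_top hα y hr).lt_top⟩
  have hwpos : 0 < ∫ X in cyl n y r, X.2 ^ (1 - 2 * σ) := by
    rw [integral_eq_lintegral_of_nonneg_ae hw0 hwm.aestronglyMeasurable]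
    exact ENNReal.toReal_pos (lintegral_wt_cyl_ne_zero y hr) (lintegral_wt_cyl_ne_top hα y hr)
  have hosc : ∫⁻ X in cyl n y r, wt n (1 - 2 * σ) X * ‖Real.log (U X + k) - c‖ₑ ≤
      C₃ * ∫⁻ X in cyl n y r, wt n (1 - 2 * σ) X := by
    refine hc.trans ?_
    rw [mul_assoc]
    gcongr
    calc _ ≤ ∫⁻ X in cyl n y r, (wt n (1 - 2 * σ) X + ENNReal.ofReal (X.2 ^ 2) *
            ‖fderiv ℝ (fun X => Real.log (U X + k)) X‖ₑ ^ 2 * wt n (1 - 2 * σ) X) :=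
          setLIntegral_mono' (measurableSet_cyl y r) fun X hX =>
            enorm_mul_wt_add_one_le _ (hpos X hX)
      _ ≤ (∫⁻ X in cyl n y r, wt n (1 - 2 * σ) X) +
            C₂ * ∫⁻ X in cyl n y (2 * r), wt n (1 - 2 * σ) X := by
          rw [lintegral_add_left measurable_wt]
          gcongr
          exact hcacc U a b k hUQ hUQ0 hk hsup y r hr hsub
      _ = (1 + C₂ * D) * ∫⁻ X in cyl n y r, wt n (1 - 2 * σ) X := by
          rw [lintegral_wt_cyl_two_mul y hr]
          ring
  refine (mean_oscillation_le hwi hw0 hwpos (hW.continuousOn.aestronglyMeasurable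
    (measurableSet_cyl y r)) hC₃ hosc).trans ?_
  linarith
end
end

section
/- Let 0 < σ < 1, n > 2σ, R > 0 and 0 < δ < R. Let u : ℝⁿ → ℝ be continuous, bounded, nonnegative on all of ℝⁿ, and C² on B_R, and let a be a bounded measurable function on ℝⁿ. Suppose that for every x ∈ B_R the principal value lim_{ε→0⁺} ∫_{{y : |y−x| > ε}} ( u(x) − u(y) ) / |x−y|^{n+2σ} dy exists and equals a(x) u(x). Then there exists a constant C > 0 depending only on n, σ, δ, R and ‖a‖_{L^∞(ℝⁿ)} such that max_{B̄_{R−δ}} u ≤ C min_{B̄_{R−δ}} u. -/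
open MeasureTheory Metric Set Real

namespace FractionalHarnack

open Module Filter Topology

/-- The kernel `|z|^{-p}` truncated at radius `r`. -/
noncomputable def truncKernel {E : Type*} [Norm E] (p r : ℝ) (z : E) : ℝ :=
  (max ‖z‖ r) ^ (-p)

section Kernel

variable {E : Type*} [NormedAddCommGroup E] {p r : ℝ}

lemma truncKernel_nonneg (hr : 0 < r) (z : E) : 0 ≤ truncKernel p r z :=
  rpow_nonneg (hr.le.trans (le_max_right _ _)) _

lemma continuous_truncKernel (hr : 0 < r) : Continuous (truncKernel p r : E → ℝ) :=
  (continuous_norm.max continuous_const).rpow_const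
    fun _ => Or.inl (hr.trans_le (le_max_right _ _)).ne'

lemma truncKernel_neg (z : E) : truncKernel p r (-z) = truncKernel p r z := by
  simp [truncKernel]

lemma truncKernel_of_le {z : E} (h : r ≤ ‖z‖) : truncKernel p r z = ‖z‖ ^ (-p) := by
  simp [truncKernel, h]

lemma truncKernel_le_rpow (hp : 0 < p) {z : E} (hz : z ≠ 0) :
    truncKernel p r z ≤ ‖z‖ ^ (-p) :=
  rpow_le_rpow_of_nonpos (norm_pos_iff.2 hz) (le_max_left _ _) (by linarith)

/-- Kernels whose truncated radii are comparable are comparable. -/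
lemma truncKernel_le_mul (hp : 0 < p) {s c : ℝ} (hr : 0 < r) (hs : 0 < s) (hc : 0 < c)
    {y z : E} (h : max ‖y‖ s ≤ c * max ‖z‖ r) :
    truncKernel p r z ≤ c ^ p * truncKernel p s y := by
  have hz : 0 < max ‖z‖ r := hr.trans_le (le_max_right _ _)
  have hy : 0 < max ‖y‖ s := hs.trans_le (le_max_right _ _)
  have h1 : (c * max ‖z‖ r) ^ (-p) ≤ (max ‖y‖ s) ^ (-p) :=
    rpow_le_rpow_of_nonpos hy h (by linarith)
  rw [mul_rpow hc.le hz.le] at h1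
  have h2 : (0 : ℝ) < c ^ p := rpow_pos_of_pos hc _
  calc truncKernel p r z = c ^ p * (c ^ (-p) * (max ‖z‖ r) ^ (-p)) := by
        rw [← mul_assoc, ← rpow_add hc]; simp [truncKernel]
    _ ≤ _ := mul_le_mul_of_nonneg_left h1 h2.le

end Kernel

section Integral

variable {E : Type*} [NormedAddCommGroup E] [NormedSpace ℝ E] [FiniteDimensional ℝ E]
  [MeasurableSpace E] [BorelSpace E] (μ : Measure E) [μ.IsAddHaarMeasure] {p r : ℝ}

lemma integrable_truncKernel (hp : (finrank ℝ E : ℝ) < p) (hr : 0 < r) :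
    Integrable (truncKernel p r : E → ℝ) μ := by
  have hp0 : 0 < p := lt_of_le_of_lt (Nat.cast_nonneg _) hp
  refine ((integrable_one_add_norm (μ := μ) hp).const_mul ((1 / r + 1) ^ p)).mono'
    (continuous_truncKernel hr).aestronglyMeasurable (Eventually.of_forall fun z => ?_)
  have hz : 0 < max ‖z‖ r := hr.trans_le (le_max_right _ _)
  have hc : 0 < 1 / r + 1 := by positivity
  rw [norm_of_nonneg (truncKernel_nonneg hr z)]
  have h : 1 + ‖z‖ ≤ (1 / r + 1) * max ‖z‖ r := by
    have h1 : 1 ≤ 1 / r * max ‖z‖ r := by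
      rw [one_div, inv_mul_eq_div, one_le_div hr]; exact le_max_right _ _
    have := le_max_left ‖z‖ r
    linarith
  have h1 := rpow_le_rpow_of_nonpos (z := -p) (by positivity) h (by linarith)
  rw [mul_rpow hc.le hz.le] at h1
  calc truncKernel p r z = (1 / r + 1) ^ p * ((1 / r + 1) ^ (-p) * (max ‖z‖ r) ^ (-p)) := by
        rw [← mul_assoc, ← rpow_add hc]; simp [truncKernel]
    _ ≤ _ := mul_le_mul_of_nonneg_left h1 (rpow_pos_of_pos hc _).le

lemma integral_truncKernel (hr : 0 < r) :
    ∫ z, truncKernel p r z ∂μ = r ^ ((finrank ℝ E : ℝ) - p) * ∫ z, truncKernel p 1 z ∂μ := by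
  have h := Measure.integral_comp_smul_of_nonneg μ (truncKernel p r : E → ℝ) r (hR := hr.le)
  have h1 : ∀ z : E, truncKernel p r (r • z) = r ^ (-p) * truncKernel p 1 z := fun z => by
    rw [truncKernel, truncKernel, ← mul_rpow hr.le (by positivity), norm_smul, norm_of_nonneg hr.le,
      mul_max_of_nonneg _ _ hr.le, mul_one]
  simp_rw [h1, integral_const_mul, smul_eq_mul] at h
  rw [sub_eq_add_neg, rpow_add hr, rpow_natCast, mul_assoc, h, mul_inv_cancel_left₀ (by positivity)]

lemma integral_truncKernel_pos (hp : (finrank ℝ E : ℝ) < p) (hr : 0 < r) :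
    0 < ∫ z, truncKernel p r z ∂μ := by
  rw [integral_pos_iff_support_of_nonneg (truncKernel_nonneg hr) (integrable_truncKernel μ hp hr)]
  have h : Function.support (truncKernel p r : E → ℝ) = univ :=
    Function.support_eq_univ fun z => (rpow_pos_of_pos (hr.trans_le (le_max_right _ _)) _).ne'
  rw [h]
  exact isOpen_univ.measure_pos μ univ_nonempty

lemma integrableOn_norm_rpow_ball [Nontrivial E] (hp : p < finrank ℝ E + 2) :
    IntegrableOn (fun z : E => ‖z‖ ^ (2 - p)) (ball 0 r) μ := by
  rcases le_or_gt r 0 with hr | hr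
  · simp [ball_eq_empty.2 hr]
  rw [integrableOn_fun_norm_addHaar μ (f := fun t => t ^ (2 - p))]
  have h := (intervalIntegral.integrableOn_Ioo_rpow_iff (s := (finrank ℝ E : ℝ) - 1 + (2 - p))
    hr).2 (by linarith)
  refine h.congr_fun (fun t ht => ?_) measurableSet_Ioo
  have : ((finrank ℝ E - 1 : ℕ) : ℝ) = (finrank ℝ E : ℝ) - 1 := by
    rw [Nat.cast_sub finrank_pos, Nat.cast_one]
  simp only [smul_eq_mul]
  rw [rpow_add ht.1, ← this, rpow_natCast]

open scoped Pointwise in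
lemma integral_norm_rpow_ball (hr : 0 < r) :
    ∫ z in ball (0 : E) r, ‖z‖ ^ (2 - p) ∂μ =
      r ^ ((finrank ℝ E : ℝ) - p + 2) * ∫ z in ball (0 : E) 1, ‖z‖ ^ (2 - p) ∂μ := by
  have h := Measure.setIntegral_comp_smul_of_pos μ (fun z : E => ‖z‖ ^ (2 - p)) (ball 0 1) hr
  have h1 : ∀ z : E, ‖r • z‖ ^ (2 - p) = r ^ (2 - p) * ‖z‖ ^ (2 - p) := fun z => by
    rw [norm_smul, norm_of_nonneg hr.le, mul_rpow hr.le (norm_nonneg _)]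
  have h2 : r • ball (0 : E) 1 = ball 0 r := by
    rw [smul_unitBall_of_pos hr]
  simp_rw [h1, integral_const_mul, smul_eq_mul, h2] at h
  rw [show (finrank ℝ E : ℝ) - p + 2 = finrank ℝ E + (2 - p) by ring, rpow_add hr, rpow_natCast,
    mul_assoc, h, mul_inv_cancel_left₀ (by positivity)]

lemma aecover_norm_gt [Nontrivial E] :
    AECover μ (𝓝[>] (0 : ℝ)) fun ε => {z : E | ε < ‖z‖} where
  ae_eventually_mem := by
    filter_upwards [Measure.ae_ne μ (0 : E)] with z hz
    exact nhdsWithin_le_nhds (Iio_mem_nhds (norm_pos_iff.2 hz))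
  measurableSet ε := measurableSet_lt measurable_const measurable_norm

/-- If `v` is touched at the origin from above by a quadratic on a ball of radius `r`, its
fractional Laplacian there is at least the one for the truncated kernel, up to the quadratic
error. -/
lemma le_of_tendsto_of_quadratic_above [Nontrivial E] (hp : (finrank ℝ E : ℝ) < p)
    (hp2 : p < finrank ℝ E + 2) (hr : 0 < r) {v : E → ℝ} {M A L : ℝ} (hv : Continuous v)
    (hM : ∀ z, |v z| ≤ M) (ℓ : E →L[ℝ] ℝ) (hA : 0 ≤ A)
    (hq : ∀ z, ‖z‖ < r → v z - v 0 ≤ ℓ z + A * ‖z‖ ^ 2)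
    (hL : Tendsto (fun ε : ℝ => ∫ z in {z : E | ε < ‖z‖}, (v 0 - v z) / ‖z‖ ^ p ∂μ)
      (𝓝[>] 0) (𝓝 L)) :
    ∫ z, truncKernel p r z * (v 0 - v z) ∂μ -
      A * (r ^ ((finrank ℝ E : ℝ) - p + 2) * ∫ z in ball (0 : E) 1, ‖z‖ ^ (2 - p) ∂μ) ≤ L := by
  have hp0 : 0 < p := lt_of_le_of_lt (Nat.cast_nonneg _) hp
  have hdiff : ∀ z, |v 0 - v z| ≤ 2 * M := fun z => by
    have := abs_sub (v 0) (v z); linarith [hM 0, hM z]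
  have hint : Integrable (fun z => truncKernel p r z * (v 0 - v z)) μ :=
    (integrable_truncKernel μ hp hr).mul_bdd (c := 2 * M)
      (by fun_prop) (Eventually.of_forall hdiff)
  refine le_of_tendsto_of_tendsto
    (((aecover_norm_gt μ).integral_tendsto_of_countably_generated hint).sub_const _) hL ?_
  filter_upwards [self_mem_nhdsWithin] with ε (hε : 0 < ε)
  set S : Set E := {z | ε < ‖z‖}
  have hS : MeasurableSet S := measurableSet_lt measurable_const measurable_norm
  have hmpow : Measurable fun z : E => ‖z‖ ^ (-p) := measurable_norm.pow_const _
  have hpow : IntegrableOn (fun z : E => ‖z‖ ^ (-p)) S μ :=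
    (integrable_truncKernel μ hp hε).integrableOn.congr_fun
      (fun z (hz : ε < ‖z‖) => truncKernel_of_le hz.le) hS
  set G : E → ℝ := (ball 0 r).indicator fun z => ℓ z * (‖z‖ ^ (-p) - truncKernel p r z) with hG
  set Q : E → ℝ := (ball 0 r).indicator fun z => ‖z‖ ^ (2 - p) with hQ
  have hGm : Measurable G :=
    (ℓ.continuous.measurable.mul (hmpow.sub (continuous_truncKernel hr).measurable)).indicator
      measurableSet_ball
  have hGint : IntegrableOn G S μ := by
    refine (hpow.const_mul (‖ℓ‖ * r)).mono' hGm.aestronglyMeasurable ?_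
    filter_upwards [ae_restrict_mem hS] with z (hz : ε < ‖z‖)
    have hz0 : z ≠ 0 := norm_pos_iff.1 (hε.trans hz)
    have h1 := truncKernel_le_rpow (r := r) hp0 hz0
    have h2 := truncKernel_nonneg (p := p) hr z
    by_cases hzr : z ∈ ball (0 : E) r
    · rw [hG, indicator_of_mem hzr, norm_mul]
      rw [mem_ball_zero_iff] at hzr
      refine mul_le_mul ((ℓ.le_opNorm z).trans (by gcongr)) ?_ (norm_nonneg _) (by positivity)
      rw [norm_of_nonneg (by linarith)]; linarith
    · rw [hG, indicator_of_notMem hzr, norm_zero]; positivity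
  have hQint : Integrable Q μ :=
    (integrable_indicator_iff measurableSet_ball).2 (integrableOn_norm_rpow_ball μ hp2)
  have hQ0 : ∀ z, 0 ≤ Q z := fun z => indicator_nonneg (fun _ _ => by positivity) _
  have hGzero : ∫ z in S, G z ∂μ = 0 := by
    rw [← integral_indicator hS]
    have h := integral_neg_eq_self (S.indicator G) μ
    have hodd : ∀ z, S.indicator G (-z) = -S.indicator G z := fun z => by
      simp only [S, G, indicator, mem_ofPred_eq, norm_neg, mem_ball_zero_iff, map_neg,
        truncKernel_neg]
      split_ifs <;> ring
    simp_rw [hodd, integral_neg] at h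
    linarith
  have hlhs : IntegrableOn (fun z => (v 0 - v z) / ‖z‖ ^ p) S μ := by
    have h : IntegrableOn (fun z => ‖z‖ ^ (-p) * (v 0 - v z)) S μ :=
      hpow.mul_bdd (c := 2 * M) (by fun_prop) (Eventually.of_forall hdiff)
    refine h.congr_fun (fun z _ => ?_) hS
    simp only [rpow_neg (norm_nonneg z), div_eq_inv_mul]
  have hQle : ∫ z in S, Q z ∂μ ≤
      r ^ ((finrank ℝ E : ℝ) - p + 2) * ∫ z in ball (0 : E) 1, ‖z‖ ^ (2 - p) ∂μ := by
    rw [← integral_norm_rpow_ball μ hr, ← integral_indicator measurableSet_ball]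
    exact setIntegral_le_integral hQint (Eventually.of_forall hQ0)
  have key : ∫ z in S, (truncKernel p r z * (v 0 - v z) - G z - A * Q z) ∂μ ≤
      ∫ z in S, (v 0 - v z) / ‖z‖ ^ p ∂μ := by
    refine setIntegral_mono_on ((hint.integrableOn.sub hGint).sub
      (hQint.integrableOn.const_mul A)) hlhs hS fun z (hz : ε < ‖z‖) => ?_
    have hz1 : 0 < ‖z‖ := hε.trans hz
    have h1 := truncKernel_le_rpow (r := r) hp0 (norm_pos_iff.1 hz1)
    have h2 := truncKernel_nonneg (p := p) hr z
    rw [div_eq_inv_mul, ← rpow_neg hz1.le]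
    by_cases hzr : z ∈ ball (0 : E) r
    · rw [hG, hQ, indicator_of_mem hzr, indicator_of_mem hzr, sub_eq_add_neg 2 p,
        rpow_add hz1, rpow_two]
      have h3 := hq z (mem_ball_zero_iff.1 hzr)
      have h4 := mul_le_mul_of_nonneg_right h3 (sub_nonneg.2 h1)
      have h5 : 0 ≤ A * ‖z‖ ^ 2 * truncKernel p r z := by positivity
      linarith
    · rw [hG, hQ, indicator_of_notMem hzr, indicator_of_notMem hzr,
        truncKernel_of_le (not_lt.1 (mem_ball_zero_iff.not.1 hzr))]
      linarith
  rw [integral_sub (f := fun z => truncKernel p r z * (v 0 - v z) - G z)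
    (hint.integrableOn.sub hGint) (hQint.integrableOn.const_mul A),
    integral_sub hint.integrableOn hGint, hGzero, integral_const_mul] at key
  have := mul_le_mul_of_nonneg_left hQle hA
  linarith

end Integral

section Translation

variable {E : Type*} [NormedAddCommGroup E] [NormedSpace ℝ E] [FiniteDimensional ℝ E]
  [MeasurableSpace E] [BorelSpace E] (μ : Measure E) [μ.IsAddHaarMeasure] {p r : ℝ}

lemma integrable_truncKernel_sub_mul (hp : (finrank ℝ E : ℝ) < p) (hr : 0 < r) {u : E → ℝ}
    {M : ℝ} (hu : Continuous u) (hM : ∀ z, |u z| ≤ M) (x : E) :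
    Integrable (fun y => truncKernel p r (y - x) * u y) μ :=
  ((integrable_truncKernel μ hp hr).comp_sub_right x).mul_bdd (c := M)
    (by fun_prop) (Eventually.of_forall hM)

/-- Lower bound for the principal value at a point where `u` is touched from above by a
quadratic. -/
lemma le_of_pv_of_quadratic_above [Nontrivial E] (hp : (finrank ℝ E : ℝ) < p)
    (hp2 : p < finrank ℝ E + 2) (hr : 0 < r) {u : E → ℝ} {M A L : ℝ} (hu : Continuous u)
    (hM : ∀ z, |u z| ≤ M) (x : E) (ℓ : E →L[ℝ] ℝ) (hA : 0 ≤ A)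
    (hq : ∀ z, ‖z‖ < r → u (x + z) - u x ≤ ℓ z + A * ‖z‖ ^ 2)
    (hL : Tendsto (fun ε : ℝ => ∫ y in {y : E | ε < dist y x}, (u x - u y) / dist x y ^ p ∂μ)
      (𝓝[>] 0) (𝓝 L)) :
    u x * ∫ z, truncKernel p r z ∂μ - ∫ y, truncKernel p r (y - x) * u y ∂μ -
      A * (r ^ ((finrank ℝ E : ℝ) - p + 2) * ∫ z in ball (0 : E) 1, ‖z‖ ^ (2 - p) ∂μ) ≤ L := by
  have hL' : Tendsto (fun ε : ℝ =>
      ∫ z in {z : E | ε < ‖z‖}, (u (x + 0) - u (x + z)) / ‖z‖ ^ p ∂μ) (𝓝[>] 0) (𝓝 L) := by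
    refine hL.congr fun ε => ?_
    have hball : MeasurableSet {y : E | ε < dist y x} :=
      measurableSet_lt measurable_const (measurable_id.dist measurable_const)
    rw [← integral_indicator hball, ← integral_indicator (measurableSet_lt measurable_const measurable_norm),
      ← integral_add_left_eq_self _ x]
    refine integral_congr_ae (Eventually.of_forall fun z => ?_)
    simp [indicator, dist_eq_norm]
  have h := le_of_tendsto_of_quadratic_above μ hp hp2 hr (v := fun z => u (x + z)) (by fun_prop)
    (fun z => hM _) ℓ hA (by simpa using hq) hL'
  have hint := integrable_truncKernel_sub_mul μ hp hr hu hM x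
  have h1 : ∫ z, truncKernel p r z * (u (x + 0) - u (x + z)) ∂μ =
      u x * ∫ z, truncKernel p r z ∂μ - ∫ y, truncKernel p r (y - x) * u y ∂μ := by
    rw [← integral_add_left_eq_self (fun y => truncKernel p r (y - x) * u y) x,
      ← integral_const_mul, ← integral_sub ((integrable_truncKernel μ hp hr).const_mul _)
        (hint.comp_add_left x)]
    refine integral_congr_ae (Eventually.of_forall fun z => ?_)
    simp only [add_zero, add_sub_cancel_left]
    ring
  rwa [h1] at h

end Translation

lemma exists_one_le_one_sub_pow_mul (n : ℕ) :
    ∃ C, 0 ≤ C ∧ ∀ q : ℝ, |q| ≤ 1 / 2 → 1 ≤ (1 - q) ^ n * (1 + n * q + C * q ^ 2) := by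
  induction n with
  | zero => exact ⟨0, le_rfl, fun q _ => by simp⟩
  | succ n ih =>
    obtain ⟨C, hC, h⟩ := ih
    refine ⟨2 * (C + n + 1), by positivity, fun q hq => ?_⟩
    have hq' := abs_le.1 hq
    refine (h q hq).trans ?_
    rw [pow_succ (1 - q) n, mul_assoc]
    refine mul_le_mul_of_nonneg_left ?_ (pow_nonneg (by linarith) _)
    push_cast
    have h1 : 0 ≤ q ^ 2 * ((C + n + 1) * (1 - 2 * q)) :=
      mul_nonneg (sq_nonneg q) (mul_nonneg (by positivity) (by linarith))
    nlinarith

/-- The barrier `(ρ² - |y|²)^{-d}` touching `u` from above at `x` is dominated near `x` by a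
quadratic with second-order coefficient of size `(ρ² - |x|²)^{-2}`. -/
lemma sub_le_quadratic_of_le_barrier {F : Type*} [NormedAddCommGroup F] [InnerProductSpace ℝ F]
    {d : ℕ} {C₂ ρ R θ h₀ : ℝ} (hC₂ : 0 ≤ C₂)
    (hpow : ∀ q : ℝ, |q| ≤ 1 / 2 → 1 ≤ (1 - q) ^ d * (1 + d * q + C₂ * q ^ 2))
    (hρ0 : 0 < ρ) (hR : 0 < R) (hθR : θ * R < 1 / 6) {u : F → ℝ} {x z : F}
    (hux : 0 < u x) (hh₀ : h₀ = ρ ^ 2 - ‖x‖ ^ 2) (hh0 : 0 < h₀) (hhR : h₀ ≤ R ^ 2)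
    (hxR : ‖x‖ ≤ R)
    (hx : ∀ y ∈ closedBall (0 : F) ρ, u y * (ρ ^ 2 - ‖y‖ ^ 2) ^ d ≤ u x * h₀ ^ d)
    (hz : ‖z‖ < θ * h₀) (hzR : ‖z‖ ≤ R) :
    u (x + z) - u x ≤ ((u x * (2 * d / h₀)) • innerSL ℝ x) z +
      u x * (d * R ^ 2 + C₂ * (9 * R ^ 2)) / h₀ ^ 2 * ‖z‖ ^ 2 := by
  simp only [smul_apply, innerSL_apply_apply, smul_eq_mul]
  set q := (2 * inner ℝ x z + ‖z‖ ^ 2) / h₀ with hq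
  have hqnum : |2 * inner ℝ x z + ‖z‖ ^ 2| ≤ 3 * R * ‖z‖ := by
    have h1 := abs_real_inner_le_norm x z
    have h2 : ‖x‖ * ‖z‖ ≤ R * ‖z‖ := by gcongr
    have h3 : ‖z‖ * ‖z‖ ≤ R * ‖z‖ := by gcongr
    have h4 := abs_le.1 h1
    exact abs_le.2 ⟨by nlinarith, by nlinarith⟩
  have hqabs : |q| ≤ 3 * R * ‖z‖ / h₀ := by
    rw [hq, abs_div, abs_of_pos hh0]; gcongr
  have hqhalf : |q| ≤ 1 / 2 := by
    refine hqabs.trans ((div_le_iff₀ hh0).2 ?_)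
    have : R * ‖z‖ ≤ R * (θ * h₀) := by gcongr
    nlinarith [mul_le_mul_of_nonneg_right hθR.le hh0.le]
  have hqsq : q ^ 2 ≤ 9 * R ^ 2 * ‖z‖ ^ 2 / h₀ ^ 2 := by
    calc q ^ 2 = |q| ^ 2 := (sq_abs q).symm
      _ ≤ (3 * R * ‖z‖ / h₀) ^ 2 := by gcongr
      _ = _ := by ring
  have hq' := abs_le.1 hqhalf
  have hxz : ρ ^ 2 - ‖x + z‖ ^ 2 = h₀ * (1 - q) := by
    rw [norm_add_sq_real, hq, mul_sub, mul_div_cancel₀ _ hh0.ne', hh₀]; ring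
  have hball : x + z ∈ closedBall (0 : F) ρ := by
    rw [mem_closedBall_zero_iff]
    refine le_of_sq_le_sq ?_ hρ0.le
    have : 0 ≤ h₀ * (1 - q) := mul_nonneg hh0.le (by linarith)
    linarith
  have hmax : u (x + z) * (ρ ^ 2 - ‖x + z‖ ^ 2) ^ d ≤ u x * h₀ ^ d :=
    hx _ hball
  rw [hxz, mul_pow, mul_left_comm, mul_comm (u x)] at hmax
  have hmax' : u (x + z) * (1 - q) ^ d ≤ u x := le_of_mul_le_mul_left hmax (by positivity)
  have hposq : 0 < (1 - q) ^ d := pow_pos (by linarith) _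
  have hle : u (x + z) ≤ u x * (1 + d * q + C₂ * q ^ 2) := by
    refine le_of_mul_le_mul_right (hmax'.trans ?_) hposq
    nlinarith [hpow q hqhalf]
  have hterm : ‖z‖ ^ 2 / h₀ ≤ R ^ 2 * ‖z‖ ^ 2 / h₀ ^ 2 := by
    rw [div_le_div_iff₀ hh0 (by positivity)]
    nlinarith [mul_nonneg (sq_nonneg ‖z‖) hh0.le]
  have hfinal : d * q + C₂ * q ^ 2 ≤
      2 * d / h₀ * inner ℝ x z + (d * R ^ 2 + C₂ * (9 * R ^ 2)) / h₀ ^ 2 * ‖z‖ ^ 2 := by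
    have h1 : (d : ℝ) * q = 2 * d / h₀ * inner ℝ x z + d * (‖z‖ ^ 2 / h₀) := by
      rw [hq]; ring
    have h2 := mul_le_mul_of_nonneg_left hterm (Nat.cast_nonneg (α := ℝ) d)
    have h3 := mul_le_mul_of_nonneg_left hqsq hC₂
    have h4 : (d * R ^ 2 + C₂ * (9 * R ^ 2)) / h₀ ^ 2 * ‖z‖ ^ 2 = d * (R ^ 2 * ‖z‖ ^ 2 / h₀ ^ 2) +
        C₂ * (9 * R ^ 2 * ‖z‖ ^ 2 / h₀ ^ 2) := by ring
    linarith
  have := mul_le_mul_of_nonneg_left hfinal hux.le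
  calc u (x + z) - u x ≤ u x * (d * q + C₂ * q ^ 2) := by linarith
    _ ≤ _ := this
    _ = _ := by ring

section Harnack

variable {E : Type*} [NormedAddCommGroup E] [InnerProductSpace ℝ E] [FiniteDimensional ℝ E]
  [MeasurableSpace E] [BorelSpace E] [Nontrivial E] (μ : Measure E) [μ.IsAddHaarMeasure]
  {p R δ : ℝ}

/-- Weak Harnack inequality: a nonnegative supersolution controls its weighted mean. -/
lemma exists_integral_le_mul (hp : (finrank ℝ E : ℝ) < p) (hp2 : p < finrank ℝ E + 2)
    (hδ0 : 0 < δ) (hδR : δ < R) (Ma : ℝ) :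
    ∃ C > 0, ∀ (u a : E → ℝ) (M : ℝ), Continuous u → (∀ x, |u x| ≤ M) → (∀ x, 0 ≤ u x) →
      (∀ x, |a x| ≤ Ma) →
      (∀ x ∈ ball (0 : E) R, Tendsto (fun ε : ℝ =>
        ∫ y in {y : E | ε < dist y x}, (u x - u y) / dist x y ^ p ∂μ) (𝓝[>] 0)
          (𝓝 (a x * u x))) →
      ∀ y ∈ closedBall (0 : E) (R - δ), ∫ z, truncKernel p R z * u z ∂μ ≤ C * u y := by
  have hp0 : 0 < p := lt_of_le_of_lt (Nat.cast_nonneg _) hp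
  have hR : 0 < R := hδ0.trans hδR
  set ρ := R - δ / 2 with hρ
  have hρ0 : 0 < ρ := by linarith
  set κ := ρ ^ 2 - (R - δ) ^ 2 with hκ
  have hκ0 : 0 < κ := by rw [hκ]; nlinarith
  set c₁ := ∫ z, truncKernel p R z ∂μ
  have hc₁ : 0 < c₁ := integral_truncKernel_pos μ hp hR
  set C₁ := R ^ ((finrank ℝ E : ℝ) - p + 2) * ∫ z in ball (0 : E) 1, ‖z‖ ^ (2 - p) ∂μ
  have hC₁ : 0 ≤ C₁ :=
    mul_nonneg (rpow_nonneg hR.le _) (integral_nonneg fun _ => by positivity)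
  set B := C₁ + ρ ^ 2 * c₁ + |Ma| * ρ ^ 2
  have hB : 0 < B := by positivity
  refine ⟨2 ^ p * B / κ, by positivity, fun u a M hu hM hu0 ha hL y hy => ?_⟩
  rw [mem_closedBall_zero_iff] at hy
  have hyκ : κ ≤ ρ ^ 2 - ‖y‖ ^ 2 := by
    have := pow_le_pow_left₀ (norm_nonneg y) hy 2
    linarith
  suffices H : ∀ s, u y / κ < s → ∫ z, truncKernel p R z * u z ∂μ ≤ 2 ^ p * B * s by
    have : ∫ z, truncKernel p R z * u z ∂μ ≤ 2 ^ p * B * (u y / κ) := by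
      refine le_of_forall_pos_le_add fun e he => ?_
      have hpos : 0 < 2 ^ p * B := by positivity
      have := H (u y / κ + e / (2 ^ p * B)) (by linarith [div_pos he hpos])
      rwa [mul_add, mul_div_cancel₀ _ hpos.ne'] at this
    calc _ ≤ _ := this
      _ = _ := by ring
  intro s hs
  have hs0 : 0 < s := lt_of_le_of_lt (div_nonneg (hu0 y) hκ0.le) hs
  have hys : u y < s * (ρ ^ 2 - ‖y‖ ^ 2) :=
    ((div_lt_iff₀ hκ0).1 hs).trans_le (mul_le_mul_of_nonneg_left hyκ hs0.le)
  obtain ⟨x, hxρ, hx⟩ := (isCompact_closedBall (0 : E) ρ).exists_isMinOn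
    (f := fun x => u x - s * (ρ ^ 2 - ‖x‖ ^ 2)) ⟨0, by simp [hρ0.le]⟩
    (by fun_prop)
  have hxneg : u x - s * (ρ ^ 2 - ‖x‖ ^ 2) < 0 := by
    have := isMinOn_iff.1 hx y (by rw [mem_closedBall_zero_iff]; linarith)
    linarith
  have hmin : ∀ z, u x - s * (ρ ^ 2 - ‖x‖ ^ 2) ≤ u z - s * (ρ ^ 2 - ‖z‖ ^ 2) := fun z => by
    rcases le_or_gt ‖z‖ ρ with hz | hz
    · exact isMinOn_iff.1 hx z (mem_closedBall_zero_iff.2 hz)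
    · have : ρ ^ 2 ≤ ‖z‖ ^ 2 := pow_le_pow_left₀ hρ0.le hz.le 2
      nlinarith [hu0 z]
  rw [mem_closedBall_zero_iff] at hxρ
  have hxR : x ∈ ball (0 : E) R := mem_ball_zero_iff.2 (by linarith)
  have hux : u x ≤ s * ρ ^ 2 := by nlinarith [sq_nonneg ‖x‖]
  have hpv := le_of_pv_of_quadratic_above μ hp hp2 hR (u := fun z => -u z) (M := M) (A := s)
    (L := -(a x * u x)) hu.neg (fun z => by simpa using hM z) x ((2 * s) • innerSL ℝ x) hs0.le
    (fun z _ => by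
      have h1 := hmin (x + z)
      rw [norm_add_sq_real] at h1
      simp only [smul_apply, innerSL_apply_apply, smul_eq_mul]
      linarith)
    ((hL x hxR).neg.congr fun ε => by
      rw [← integral_neg]
      refine integral_congr_ae (Eventually.of_forall fun z => ?_)
      ring)
  simp only [mul_neg, integral_neg] at hpv
  have hcomp : ∫ z, truncKernel p R z * u z ∂μ ≤
      2 ^ p * ∫ z, truncKernel p R (z - x) * u z ∂μ := by
    rw [← integral_const_mul]
    refine integral_mono (by simpa using integrable_truncKernel_sub_mul μ hp hR hu hM 0)
      ((integrable_truncKernel_sub_mul μ hp hR hu hM x).const_mul _) fun z => ?_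
    rw [← mul_assoc]
    refine mul_le_mul_of_nonneg_right (truncKernel_le_mul hp0 hR hR two_pos ?_) (hu0 z)
    have h1 := norm_sub_le z x
    have h2 := le_max_left ‖z‖ R
    have h3 := le_max_right ‖z‖ R
    exact max_le (by linarith) (by linarith)
  have haux : -(a x * u x) ≤ |Ma| * (s * ρ ^ 2) := by
    have h1 : -a x ≤ |Ma| := (neg_le_abs _).trans ((ha x).trans (le_abs_self _))
    calc -(a x * u x) = -a x * u x := by ring
      _ ≤ |Ma| * u x := mul_le_mul_of_nonneg_right h1 (hu0 x)
      _ ≤ _ := mul_le_mul_of_nonneg_left hux (abs_nonneg _)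
  have hc := mul_le_mul_of_nonneg_right hux hc₁.le
  calc _ ≤ _ := hcomp
    _ ≤ 2 ^ p * (B * s) := by
      refine mul_le_mul_of_nonneg_left ?_ (by positivity)
      simp only [B]
      linarith
    _ = _ := by ring

/-- Local boundedness: a nonnegative subsolution is controlled by its weighted mean. -/
lemma exists_le_mul_integral (hp : (finrank ℝ E : ℝ) < p) (hp2 : p < finrank ℝ E + 2)
    (hδ0 : 0 < δ) (hδR : δ < R) (Ma : ℝ) :
    ∃ C > 0, ∀ (u a : E → ℝ) (M : ℝ), Continuous u → (∀ x, |u x| ≤ M) → (∀ x, 0 ≤ u x) →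
      (∀ x, |a x| ≤ Ma) →
      (∀ x ∈ ball (0 : E) R, Tendsto (fun ε : ℝ =>
        ∫ y in {y : E | ε < dist y x}, (u x - u y) / dist x y ^ p ∂μ) (𝓝[>] 0)
          (𝓝 (a x * u x))) →
      ∀ y ∈ closedBall (0 : E) (R - δ), u y ≤ C * ∫ z, truncKernel p R z * u z ∂μ := by
  have hp0 : 0 < p := lt_of_le_of_lt (Nat.cast_nonneg _) hp
  have hR : 0 < R := hδ0.trans hδR
  set d := finrank ℝ E with hd
  set ρ := R - δ / 2 with hρ
  have hρ0 : 0 < ρ := by linarith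
  set κ := ρ ^ 2 - (R - δ) ^ 2 with hκ
  have hκ0 : 0 < κ := by rw [hκ]; nlinarith
  set c₁ := ∫ z : E, truncKernel p 1 z ∂μ
  have hc₁ : 0 < c₁ := integral_truncKernel_pos μ hp one_pos
  set C₁ := ∫ z in ball (0 : E) 1, ‖z‖ ^ (2 - p) ∂μ
  have hC₁ : 0 ≤ C₁ := integral_nonneg fun _ => by positivity
  obtain ⟨C₂, hC₂, hpow⟩ := exists_one_le_one_sub_pow_mul d
  set D := d * R ^ 2 + C₂ * (9 * R ^ 2)
  have hD : 0 ≤ D := by positivity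
  obtain ⟨θ, hθ0, hθR, hθ⟩ : ∃ θ > 0, θ * R < 1 / 6 ∧
      D * C₁ * θ ^ 2 + |Ma| * (θ * R ^ 2) ^ (p - d) < c₁ / 2 := by
    have hcont : Tendsto (fun θ : ℝ => D * C₁ * θ ^ 2 + |Ma| * (θ * R ^ 2) ^ (p - d))
        (𝓝[>] 0) (𝓝 (D * C₁ * 0 ^ 2 + |Ma| * (0 * R ^ 2) ^ (p - d))) := by
      refine (Continuous.tendsto ?_ 0).mono_left nhdsWithin_le_nhds
      have h1 : Continuous fun θ : ℝ => (θ * R ^ 2) ^ (p - d) :=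
        (by fun_prop : Continuous fun θ : ℝ => θ * R ^ 2).rpow_const
          fun _ => Or.inr (by linarith)
      fun_prop
    have hcont' : Tendsto (fun θ : ℝ => θ * R) (𝓝[>] 0) (𝓝 (0 * R)) :=
      (Continuous.tendsto (by fun_prop) 0).mono_left nhdsWithin_le_nhds
    rw [zero_mul, zero_rpow (by linarith)] at hcont
    rw [zero_mul] at hcont'
    obtain ⟨θ, h1, h2, h3⟩ := ((eventually_mem_nhdsWithin (a := (0 : ℝ)) (s := Ioi 0)).and
      ((hcont'.eventually_lt_const (by norm_num : (0 : ℝ) < 1 / 6)).and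
        (hcont.eventually_lt_const (by simpa using hc₁ : _ < c₁ / 2)))).exists
    exact ⟨θ, h1, h2, h3⟩
  refine ⟨(2 * R) ^ p / (c₁ / 2 * θ ^ d * κ ^ d), by positivity,
    fun u a M hu hM hu0 ha hL y hy => ?_⟩
  set I := ∫ z, truncKernel p R z * u z ∂μ
  have hI : 0 ≤ I := integral_nonneg fun z => mul_nonneg (truncKernel_nonneg hR z) (hu0 z)
  rcases (hu0 y).eq_or_lt with hy0 | hy0
  · rw [← hy0]; positivity
  rw [mem_closedBall_zero_iff] at hy
  have hyκ : κ ≤ ρ ^ 2 - ‖y‖ ^ 2 := by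
    have := pow_le_pow_left₀ (norm_nonneg y) hy 2
    linarith
  obtain ⟨x, hxρ, hx⟩ := (isCompact_closedBall (0 : E) ρ).exists_isMaxOn
    (f := fun x => u x * (ρ ^ 2 - ‖x‖ ^ 2) ^ d) ⟨0, by simp [hρ0.le]⟩
    (by fun_prop)
  rw [mem_closedBall_zero_iff] at hxρ
  have hxR : x ∈ ball (0 : E) R := mem_ball_zero_iff.2 (by linarith)
  set h₀ := ρ ^ 2 - ‖x‖ ^ 2 with hh₀
  have hyx : u y * κ ^ d ≤ u x * h₀ ^ d := by
    refine le_trans ?_ (isMaxOn_iff.1 hx y (by rw [mem_closedBall_zero_iff]; linarith))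
    exact mul_le_mul_of_nonneg_left (pow_le_pow_left₀ hκ0.le hyκ _) (hu0 y)
  have hd0 : d ≠ 0 := finrank_pos.ne'
  have hprod : 0 < u x * h₀ ^ d := lt_of_lt_of_le (by positivity) hyx
  have hux : 0 < u x := (hu0 x).lt_of_ne fun h => by simp [← h] at hprod
  have hh0 : 0 < h₀ := by
    refine lt_of_le_of_ne (by nlinarith [norm_nonneg x]) fun h => ?_
    simp [← h, hd0] at hprod
  have hhR : h₀ ≤ R ^ 2 := by nlinarith [sq_nonneg ‖x‖]
  set r := θ * h₀ with hr
  have hr0 : 0 < r := by positivity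
  have hrR2 : r ≤ θ * R ^ 2 := mul_le_mul_of_nonneg_left hhR hθ0.le
  have hrR : r ≤ R / 6 := by nlinarith
  have hxR' : ‖x‖ ≤ R := by linarith
  have hquad : ∀ z, ‖z‖ < r → u (x + z) - u x ≤
      ((u x * (2 * d / h₀)) • innerSL ℝ x) z + u x * D / h₀ ^ 2 * ‖z‖ ^ 2 := fun z hz =>
    sub_le_quadratic_of_le_barrier hC₂ hpow hρ0 hR hθR hux hh₀ hh0 hhR hxR'
      (isMaxOn_iff.1 hx) hz (by linarith)
  have hpv := le_of_pv_of_quadratic_above μ hp hp2 hr0 hu hM x _ (by positivity) hquad (hL x hxR)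
  have hcomp : ∫ z, truncKernel p r (z - x) * u z ∂μ ≤ (2 * R / r) ^ p * I := by
    rw [← integral_const_mul]
    refine integral_mono (integrable_truncKernel_sub_mul μ hp hr0 hu hM x)
      (by simpa using (integrable_truncKernel_sub_mul μ hp hR hu hM 0).const_mul _) fun z => ?_
    rw [← mul_assoc]
    refine mul_le_mul_of_nonneg_right
      (truncKernel_le_mul hp0 hr0 hR (by positivity) ?_) (hu0 z)
    have h1 : ‖z‖ ≤ ‖z - x‖ + ‖x‖ := by simpa using norm_add_le (z - x) x
    have h2 := le_max_left ‖z - x‖ r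
    have h3 : R ≤ R / r * max ‖z - x‖ r := by
      rw [div_mul_eq_mul_div, le_div_iff₀ hr0]
      exact mul_le_mul_of_nonneg_left (le_max_right _ _) hR.le
    have h4 : max ‖z - x‖ r ≤ R / r * max ‖z - x‖ r :=
      le_mul_of_one_le_left (hr0.le.trans (le_max_right _ _)) ((one_le_div hr0).2 (by linarith))
    rw [mul_div_assoc, mul_assoc]
    exact max_le (by linarith) (by linarith)
  have haux : a x * u x ≤ |Ma| * u x :=
    mul_le_mul_of_nonneg_right ((le_abs_self _).trans ((ha x).trans (le_abs_self _))) (hu0 x)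
  rw [integral_truncKernel μ hr0, ← hd, rpow_add hr0, rpow_two] at hpv
  have hscale : r ^ ((d : ℝ) - p) * r ^ p = r ^ d := by
    rw [← rpow_add hr0, sub_add_cancel, rpow_natCast]
  have hscale' : r ^ d * r ^ (p - d) = r ^ p := by
    rw [← rpow_natCast, ← rpow_add hr0, add_sub_cancel]
  have hscale2 : (2 * R / r) ^ p * r ^ p = (2 * R) ^ p := by
    rw [← mul_rpow (by positivity) hr0.le, div_mul_cancel₀ _ hr0.ne']
  have hrp : 0 < r ^ p := rpow_pos_of_pos hr0 _
  have hbound : r ^ (p - d) ≤ (θ * R ^ 2) ^ (p - d) :=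
    rpow_le_rpow hr0.le hrR2 (by linarith)
  have hmul : (u x * r ^ d) * (c₁ - D * C₁ * θ ^ 2 - |Ma| * r ^ (p - d)) ≤ (2 * R) ^ p * I := by
    have h1 : u x * (r ^ ((d : ℝ) - p) * c₁) - (2 * R / r) ^ p * I -
        u x * D / h₀ ^ 2 * (r ^ ((d : ℝ) - p) * r ^ 2 * C₁) ≤ |Ma| * u x := by linarith
    have h2 : u x * D / h₀ ^ 2 * (r ^ ((d : ℝ) - p) * r ^ 2 * C₁) =
        u x * r ^ ((d : ℝ) - p) * (D * C₁ * θ ^ 2) := by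
      rw [hr]; field_simp
    rw [h2] at h1
    have h3 := mul_le_mul_of_nonneg_right h1 hrp.le
    calc (u x * r ^ d) * (c₁ - D * C₁ * θ ^ 2 - |Ma| * r ^ (p - d))
        = u x * (r ^ ((d : ℝ) - p) * r ^ p) * (c₁ - D * C₁ * θ ^ 2) -
            |Ma| * u x * (r ^ d * r ^ (p - d)) := by rw [hscale]; ring
      _ ≤ (2 * R / r) ^ p * r ^ p * I := by rw [hscale']; linarith
      _ = _ := by rw [hscale2]
  have hhalf : c₁ / 2 ≤ c₁ - D * C₁ * θ ^ 2 - |Ma| * r ^ (p - d) := by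
    have := mul_le_mul_of_nonneg_left hbound (abs_nonneg Ma)
    linarith
  rw [div_mul_eq_mul_div, le_div_iff₀ (by positivity)]
  calc u y * (c₁ / 2 * θ ^ d * κ ^ d) = (u y * κ ^ d) * (c₁ / 2 * θ ^ d) := by ring
    _ ≤ (u x * h₀ ^ d) * (c₁ / 2 * θ ^ d) := by gcongr
    _ = (u x * r ^ d) * (c₁ / 2) := by rw [hr, mul_pow]; ring
    _ ≤ _ := mul_le_mul_of_nonneg_left hhalf (by positivity)
    _ ≤ _ := hmul

end Harnack

end FractionalHarnack

/-- **Harnack inequality for `(−Δ)^σ u = a(x) u`** (Theorem 3.3): if `u ≥ 0` is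
continuous and bounded on `ℝⁿ`, `C²` on `B_R`, `a` is bounded measurable, and for
every `x ∈ B_R` the principal value
`lim_{ε→0⁺} ∫_{|y−x|>ε} (u(x) − u(y))/|x−y|^{n+2σ} dy` exists and equals
`a(x)u(x)`, then `max_{B̄_{R−δ}} u ≤ C min_{B̄_{R−δ}} u`, with `C` depending only
on `n, σ, δ, R, ‖a‖_{L^∞(ℝⁿ)}`. -/
theorem fractional_harnack_pv (n : ℕ) (σ : ℝ) (hσ0 : 0 < σ) (hσ1 : σ < 1)
    (hn : 2 * σ < n) (R : ℝ) (hR : 0 < R) (δ : ℝ) (hδ0 : 0 < δ) (hδR : δ < R)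
    (Ma : ℝ) :
    ∃ C > 0, ∀ (u a : EuclideanSpace ℝ (Fin n) → ℝ) (M : ℝ),
      Continuous u → (∀ x, |u x| ≤ M) → (∀ x, 0 ≤ u x) →
      ContDiffOn ℝ 2 u (ball (0 : EuclideanSpace ℝ (Fin n)) R) →
      Measurable a → (∀ x, |a x| ≤ Ma) →
      (∀ x ∈ ball (0 : EuclideanSpace ℝ (Fin n)) R,
        Filter.Tendsto (fun ε : ℝ =>
            ∫ y in {y : EuclideanSpace ℝ (Fin n) | ε < dist y x},
              (u x - u y) / (dist x y) ^ ((n : ℝ) + 2 * σ))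
          (nhdsWithin 0 (Ioi 0)) (nhds (a x * u x))) →
      ∀ x ∈ closedBall (0 : EuclideanSpace ℝ (Fin n)) (R - δ),
        ∀ y ∈ closedBall (0 : EuclideanSpace ℝ (Fin n)) (R - δ),
          u x ≤ C * u y := by
  have hn0 : 0 < n := by
    have : (0 : ℝ) < n := by linarith
    exact_mod_cast this
  have hd : Module.finrank ℝ (EuclideanSpace ℝ (Fin n)) = n := finrank_euclideanSpace_fin
  have : Nontrivial (EuclideanSpace ℝ (Fin n)) :=
    Module.nontrivial_of_finrank_pos (R := ℝ) (by rwa [hd])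
  obtain ⟨C, hC, hlow⟩ := FractionalHarnack.exists_integral_le_mul
    (volume : Measure (EuclideanSpace ℝ (Fin n))) (p := n + 2 * σ)
    (by rw [hd]; linarith) (by rw [hd]; linarith) hδ0 hδR Ma
  obtain ⟨C', hC', hup⟩ := FractionalHarnack.exists_le_mul_integral
    (volume : Measure (EuclideanSpace ℝ (Fin n))) (p := n + 2 * σ)
    (by rw [hd]; linarith) (by rw [hd]; linarith) hδ0 hδR Ma
  refine ⟨C' * C, by positivity, fun u a M hu hM hu0 _ _ ha hL x hx y hy => ?_⟩
  rw [mul_assoc]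
  exact (hup u a M hu hM hu0 ha hL x hx).trans
    (mul_le_mul_of_nonneg_left (hlow u a M hu hM hu0 ha hL y hy) hC'.le)
end
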